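/- arXiv:2206.14032 — 3 statements merged into one kernel-verified Lean document; each statement's English description precedes it below -/
import Mathlib

section
/- Let $D$ be a positive integer with $D \equiv 2 \pmod 4$. If $r > 1$ is an integer and $m$ is an integer such that in the ring $\mathbb{Z}[\sqrt{-D}]$ one has $(1 + \sqrt{-D})^r = m + \sqrt{-D}$ or $(1 + \sqrt{-D})^r = m - \sqrt{-D}$, then $D = 2$ and $r = 3$. Further, let $D$ be a positive integer with $D \equiv 0 \pmod 4$ such that $1 + D$ is a prime or a prime power; if $r > 1$ is an integer and $m$ is an integer with $(1 + \sqrt{-D})^r = m + \sqrt{-D}$ or $(1 + \sqrt{-D})^r = m - \sqrt{-D}$ in $\mathbb{Z}[\sqrt{-D}]$, then $D = 4$ and $r = 3$. -/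
/-!
Put `α = 1 + √-D`; we look for `r > 1` with `im (α ^ r) = ± 1`.

The engine is `p`-adic: if `α ^ i = 1 + u β` with `u` highly divisible by `p`, `p ∣ D`, `p ∣ re β`
and `p ∤ im β`, then `im (α ^ r)` determines `r` within its residue class modulo `i`. Since
`α ^ 4 = 1 + 4 β` for even `D`, taking `p = 2` leaves only `r ≡ 3 mod 4` with
`im (α ^ r) ≡ 3 - D mod 4`, and gives `r = 3` when `D` is `2` or `4`.

If `D ≡ 2 mod 4`, the value is `1`, so `im (α ^ r) ≡ r mod D` gives `D ∣ r - 1`. When `D ≠ 2`, a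
suitable odd prime `l ∣ D` has `α ^ l = 1 + l β`, and the `l`-adic version forces `r = 1`.

If `D ≡ 0 mod 4`, the value is `-1`, so `D ∣ r + 1`. For `1 + D = p ^ a`, comparing
`im (α ^ r) ≡ 2 ^ (r - 1) mod p` with Fermat's little theorem gives `p = 5`. Writing
`r = 2 s + 1` and `α ^ s = x + y √-D`, the value `-1` becomes `z ^ 2 - 5 ^ a y ^ 2 = -1` with
`z = x + y`. For even `a` this factors; for odd `a ≥ 3` it is `z ^ 2 - 5 Y ^ 2 = -1` with `5 ∣ Y`,
which forces `41 ∣ z ^ 2 + 5 Y ^ 2`, and then the norm equation makes `8` a fourth power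
modulo `41`.
-/

section PAdic

variable {A : Type*} [CommRing A] {p : ℕ} {u : ℤ}

-- For `u = p ^ c` the condition `p * u * p ∣ u ^ p` reads `c ≥ 1`, and `c ≥ 2` when `p = 2`; it is
-- what makes the linear term of the binomial expansion dominate `p`-adically.
theorem exists_one_add_mul_pow_eq (hp : p.Prime) (hpu : p * u * p ∣ u ^ p) (x : A) {t : ℕ}
    (ht : t ≠ 0) :
    ∃ (e o : ℕ) (y : A), ¬ p ∣ o ∧ (1 + u * x) ^ t = 1 + p ^ e * u * (o * x + p * y) := by
  obtain ⟨e, o, ho, rfl⟩ := Nat.exists_eq_pow_mul_and_not_dvd ht p hp.ne_one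
  obtain ⟨w, rfl⟩ : (p : ℤ) ∣ u :=
    (Nat.prime_iff_prime_int.mp hp).dvd_of_dvd_pow ((dvd_mul_left _ _).trans hpu)
  have hpuA : (p : A) * ((p * w : ℤ) : A) * p ∣ ((p * w : ℤ) : A) ^ p := by
    simpa using map_dvd (Int.castRingHom A) hpu
  obtain ⟨y, hy⟩ := ZMod.exists_one_add_mul_pow_prime_pow_eq hp
    (by push_cast; exact dvd_mul_right _ _) hpuA x e
  obtain ⟨k, hk⟩ := Polynomial.powAddExpansion 1 (p ^ e * ((p * w : ℤ) : A) * (x + p * y)) o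
  refine ⟨e, o, o * y + k * p ^ e * w * (x + p * y) ^ 2, ho, ?_⟩
  rw [pow_mul, hy, hk, one_pow, one_pow]
  push_cast
  ring

theorem map_one_add_mul_pow_ne (f : A →+ ℤ) (hp : p.Prime) (hu : u ≠ 0) (hpu : p * u * p ∣ u ^ p)
    {x : A} (hx : ¬ (p : ℤ) ∣ f x) {t : ℕ} (ht : t ≠ 0) : f ((1 + u * x) ^ t) ≠ f 1 := by
  obtain ⟨e, o, y, ho, h⟩ := exists_one_add_mul_pow_eq hp hpu x ht
  have hmap : f ((1 + u * x) ^ t) = f 1 + p ^ e * u * (o * f x + p * f y) := by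
    have hsmul : (1 + u * x) ^ t = 1 + (p ^ e * u : ℤ) • ((o : ℤ) • x + (p : ℤ) • y) := by
      rw [h]
      simp only [zsmul_eq_mul]
      push_cast
      ring
    rw [hsmul]
    simp only [map_add, map_zsmul, smul_eq_mul]
  intro heq
  have hsum : (o : ℤ) * f x + p * f y = 0 := by
    have hne : (p : ℤ) ^ e * u ≠ 0 := mul_ne_zero (by exact_mod_cast pow_ne_zero e hp.ne_zero) hu
    exact (mul_eq_zero.mp (by linarith)).resolve_left hne
  have hdvd : (p : ℤ) ∣ o * f x := ⟨-f y, by linarith⟩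
  exact ((Nat.prime_iff_prime_int.mp hp).dvd_or_dvd hdvd).elim
    (fun h ↦ ho (Int.natCast_dvd_natCast.mp h)) hx

theorem exists_one_add_pow_prime_eq (hp : p.Prime) (hp3 : 3 < p) {x : A} (hpx : (p : A) ∣ x ^ 2) :
    ∃ y : A, (1 + x) ^ p = 1 + p * (x + x ^ 2 * y) := by
  have hdvd : p * x * x ∣ x ^ p :=
    calc p * x * x = p * x ^ 2 := by ring
      _ ∣ x ^ 2 * x ^ 2 := mul_dvd_mul_right hpx _
      _ = x ^ 4 := by ring
      _ ∣ x ^ p := pow_dvd_pow x hp3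
  obtain ⟨y, hy⟩ := ZMod.exists_one_add_mul_pow_prime_eq hp dvd_rfl hdvd 1
  refine ⟨y, ?_⟩
  rw [mul_one] at hy
  rw [hy]
  ring

end PAdic

section Quadratic

variable {d : ℤ}

theorem dvd_re_pow_sub (a : ℤ√d) (n : ℕ) : d ∣ (a ^ n).re - a.re ^ n := by
  induction n with
  | zero => simp
  | succ n ih =>
    obtain ⟨k, hk⟩ := ih
    refine ⟨k * a.re + (a ^ n).im * a.im, ?_⟩
    rw [pow_succ, Zsqrtd.re_mul, pow_succ]
    linear_combination a.re * hk

theorem dvd_im_pow_succ_sub (a : ℤ√d) (n : ℕ) :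
    d ∣ (a ^ (n + 1)).im - (n + 1) * a.re ^ n * a.im := by
  induction n with
  | zero => simp
  | succ n ih =>
    obtain ⟨k, hk⟩ := ih
    obtain ⟨j, hj⟩ := dvd_re_pow_sub a (n + 1)
    refine ⟨j * a.im + k * a.re, ?_⟩
    rw [pow_succ a (n + 1), Zsqrtd.im_mul]
    push_cast
    linear_combination a.re * hk + a.im * hj

theorem dvd_re_pow_of_odd {k : ℤ} {a : ℤ√d} (h : k ∣ a.re) {n : ℕ} (hn : Odd n) :
    k ∣ (a ^ n).re := by
  obtain ⟨m, rfl⟩ := hn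
  induction m with
  | zero => simpa using h
  | succ m ih =>
    have him : k ∣ (a ^ 2).im := by
      rw [sq, Zsqrtd.im_mul]
      exact (h.mul_right _).add (h.mul_left _)
    rw [show 2 * (m + 1) + 1 = 2 * m + 1 + 2 by ring, pow_add, Zsqrtd.re_mul]
    exact (ih.mul_right _).add (him.mul_left _)

theorem norm_dvd_im_pow_succ_sub (a : ℤ√d) (n : ℕ) :
    a.norm ∣ (a ^ (n + 1)).im - (2 * a.re) ^ n * a.im := by
  have htrace : a - ((2 * a.re : ℤ) : ℤ√d) = -star a := by
    ext <;> simp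
    ring
  have hdvd : ((a.norm : ℤ) : ℤ√d) ∣ a * (a ^ n - ((2 * a.re : ℤ) : ℤ√d) ^ n) := by
    rw [Zsqrtd.norm_eq_mul_conj]
    refine mul_dvd_mul_left a ?_
    rw [← neg_dvd, ← htrace]
    exact sub_dvd_pow_sub_pow _ _ n
  have him : (a * (a ^ n - ((2 * a.re : ℤ) : ℤ√d) ^ n)).im =
      (a ^ (n + 1)).im - (2 * a.re) ^ n * a.im := by
    rw [mul_sub, ← pow_succ', Zsqrtd.im_sub, ← Int.cast_pow, mul_comm a, Zsqrtd.im_smul]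
  exact him ▸ ((Zsqrtd.intCast_dvd _ _).mp hdvd).2

theorem eq_of_im_pow_eq_of_modEq {a b : ℤ√d} {p i : ℕ} {u : ℤ} (hp : p.Prime) (hu : u ≠ 0)
    (hpu : p * u * p ∣ u ^ p) (hd : (p : ℤ) ∣ d) (ha : ¬ (p : ℤ) ∣ a.re) (hb : a ^ i = 1 + u * b)
    (hre : (p : ℤ) ∣ b.re) (him : ¬ (p : ℤ) ∣ b.im) {r s : ℕ} (hrs : r ≡ s [MOD i])
    (h : (a ^ r).im = (a ^ s).im) : r = s := by
  wlog hsr : s ≤ r generalizing r s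
  · exact (this hrs.symm h.symm (le_of_not_ge hsr)).symm
  obtain ⟨t, ht⟩ := (Nat.modEq_iff_dvd' hsr).mp hrs.symm
  obtain rfl : r = s + i * t := by lia
  by_contra hne
  have ht0 : t ≠ 0 := by
    rintro rfl
    simp at hne
  have hp' := Nat.prime_iff_prime_int.mp hp
  have hnd : ¬ (p : ℤ) ∣ (a ^ s * b).im := by
    have hare : ¬ (p : ℤ) ∣ (a ^ s).re := fun hdvd ↦
      ha (hp'.dvd_of_dvd_pow ((dvd_sub_right hdvd).mp (hd.trans (dvd_re_pow_sub a s))))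
    rw [Zsqrtd.im_mul, dvd_add_left (hre.mul_left _)]
    exact fun hdvd ↦ (hp'.dvd_or_dvd hdvd).elim hare him
  let f : ℤ√d →+ ℤ :=
    (AddMonoidHom.mk' Zsqrtd.im Zsqrtd.im_add).comp (AddMonoidHom.mulLeft (a ^ s))
  apply map_one_add_mul_pow_ne f hp hu hpu hnd ht0
  rw [← hb, ← pow_mul]
  simpa [f, pow_add] using h

end Quadratic

section OneAddSqrtd

variable {d : ℤ} {r : ℕ}

/-- The element `1 + √d` of `ℤ√d`, in the anonymous-constructor form of its coordinates. -/
abbrev oneAddSqrtd (d : ℤ) : ℤ√d := ⟨1, 1⟩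

theorem dvd_im_oneAddSqrtd_pow_sub (d : ℤ) (r : ℕ) : d ∣ (oneAddSqrtd d ^ r).im - r := by
  cases r with
  | zero => simp
  | succ n => simpa using dvd_im_pow_succ_sub (oneAddSqrtd d) n

theorem one_sub_dvd_im_oneAddSqrtd_pow_succ_sub (d : ℤ) (n : ℕ) :
    1 - d ∣ (oneAddSqrtd d ^ (n + 1)).im - 2 ^ n := by
  simpa [Zsqrtd.norm_def] using norm_dvd_im_pow_succ_sub (oneAddSqrtd d) n

theorem oneAddSqrtd_pow_three (d : ℤ) : oneAddSqrtd d ^ 3 = ⟨1 + 3 * d, 3 + d⟩ := by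
  ext <;> simp [pow_succ] <;> ring

theorem oneAddSqrtd_two_mul_pow_four (e : ℤ) :
    oneAddSqrtd (2 * e) ^ 4 = 1 + (4 : ℤ) * ⟨e * (e + 3), 1 + 2 * e⟩ := by
  ext <;> simp [pow_succ] <;> ring

theorem eq_of_im_oneAddSqrtd_pow_eq_of_even (hd : Even d) {s : ℕ} (hrs : r ≡ s [MOD 4])
    (h : (oneAddSqrtd d ^ r).im = (oneAddSqrtd d ^ s).im) : r = s := by
  obtain ⟨e, rfl⟩ := hd.two_dvd
  refine eq_of_im_pow_eq_of_modEq (p := 2) Nat.prime_two (by norm_num) (by norm_num)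
    (dvd_mul_right 2 e) (by norm_num) (oneAddSqrtd_two_mul_pow_four e) ?_ (by simp) hrs h
  have : Even (e * (e + 3)) := by grind
  exact this.two_dvd

theorem im_oneAddSqrtd_pow_modEq_of_even (hd : Even d) (r : ℕ) :
    (oneAddSqrtd d ^ r).im ≡ (oneAddSqrtd d ^ (r % 4)).im [ZMOD 4] := by
  obtain ⟨e, rfl⟩ := hd.two_dvd
  have hfour : ((4 : ℤ) : ℤ√(2 * e)) ∣ oneAddSqrtd (2 * e) ^ 4 - 1 := by
    rw [oneAddSqrtd_two_mul_pow_four, add_sub_cancel_left]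
    exact dvd_mul_right _ _
  have hdvd : ((4 : ℤ) : ℤ√(2 * e)) ∣ oneAddSqrtd (2 * e) ^ r - oneAddSqrtd (2 * e) ^ (r % 4) := by
    nth_rw 1 [← Nat.mod_add_div r 4]
    rw [pow_add, pow_mul, ← mul_sub_one]
    exact (hfour.trans (sub_one_dvd_pow_sub_one _ _)).mul_left _
  exact (Int.modEq_iff_dvd.mpr ((Zsqrtd.intCast_dvd _ _).mp hdvd).2).symm

theorem modEq_three_of_im_oneAddSqrtd_pow (hd : Even d) (hr : 1 < r)
    (h : (oneAddSqrtd d ^ r).im = 1 ∨ (oneAddSqrtd d ^ r).im = -1) :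
    r ≡ 3 [MOD 4] ∧ (oneAddSqrtd d ^ r).im ≡ 3 + d [ZMOD 4] := by
  have hmod := im_oneAddSqrtd_pow_modEq_of_even hd r
  have hone : r % 4 = 1 → (oneAddSqrtd d ^ r).im ≠ 1 := fun hr1 him ↦
    hr.ne' (eq_of_im_oneAddSqrtd_pow_eq_of_even hd (s := 1) hr1 (by simpa using him))
  rcases (by lia : r % 4 = 0 ∨ r % 4 = 1 ∨ r % 4 = 2 ∨ r % 4 = 3) with h0 | h1 | h2 | h3
  · simp only [h0, pow_zero, Zsqrtd.im_one, Int.ModEq] at hmod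
    lia
  · simp only [h1, pow_one, Int.ModEq] at hmod
    have := hone h1
    lia
  · simp only [h2, pow_two, Zsqrtd.im_mul, Int.ModEq] at hmod
    lia
  · rw [h3, oneAddSqrtd_pow_three] at hmod
    exact ⟨h3, hmod⟩

-- `α ^ 3 = 1 + 3 (d + (1 + d / 3) √d)`, so the prime `3` fails exactly when `d ≡ 6 mod 9`.
theorem exists_oneAddSqrtd_pow_prime_eq {l : ℕ} (hl : l.Prime) (hl2 : l ≠ 2) (hld : (l : ℤ) ∣ d)
    (hl3 : l = 3 → ¬ 9 ∣ d + 3) :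
    ∃ b : ℤ√d, oneAddSqrtd d ^ l = 1 + (l : ℤ) * b ∧ (l : ℤ) ∣ b.re ∧ ¬ (l : ℤ) ∣ b.im := by
  by_cases h3 : l = 3
  · subst h3
    obtain ⟨w, rfl⟩ := hld
    refine ⟨⟨3 * w, 1 + w⟩, ?_, dvd_mul_right _ _, by have := hl3 rfl; push_cast at *; lia⟩
    rw [Nat.cast_ofNat, oneAddSqrtd_pow_three]
    ext <;> simp
    ring
  · have hl4 : 3 < l := by have := hl.two_le; lia
    have hsq : (Zsqrtd.sqrtd : ℤ√d) ^ 2 = d := by rw [sq, Zsqrtd.dmuld]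
    have hdvd : ((l : ℕ) : ℤ√d) ∣ Zsqrtd.sqrtd ^ 2 := by
      rw [hsq, ← Int.cast_natCast]
      exact (Zsqrtd.intCast_dvd_intCast _ _).mpr hld
    obtain ⟨y, hy⟩ := exists_one_add_pow_prime_eq hl hl4 hdvd
    refine ⟨Zsqrtd.sqrtd + (d : ℤ√d) * y, ?_, ?_, ?_⟩
    · have hα : oneAddSqrtd d = 1 + Zsqrtd.sqrtd := by ext <;> simp
      rw [hα, hy, hsq, Int.cast_natCast]
    · simpa using hld.mul_right _
    · have him : (Zsqrtd.sqrtd + (d : ℤ√d) * y).im = 1 + d * y.im := by simp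
      rw [him, dvd_add_left (hld.mul_right _)]
      exact (Nat.prime_iff_prime_int.mp hl).not_dvd_one

theorem eq_one_of_im_oneAddSqrtd_pow_eq_one {l : ℕ} (hl : l.Prime) (hl2 : l ≠ 2)
    (hld : (l : ℤ) ∣ d) (hl3 : l = 3 → ¬ 9 ∣ d + 3) (h : (oneAddSqrtd d ^ r).im = 1) : r = 1 := by
  obtain ⟨b, hb, hre, him⟩ := exists_oneAddSqrtd_pow_prime_eq hl hl2 hld hl3
  have hl0 : (l : ℤ) ≠ 0 := by exact_mod_cast hl.ne_zero
  have hpow : (l : ℤ) * l * l ∣ (l : ℤ) ^ l := by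
    rw [← pow_two, ← pow_succ]
    exact pow_dvd_pow _ (by have := hl.two_le; lia)
  have hr : r ≡ 1 [MOD l] := by
    rw [← Int.natCast_modEq_iff, Int.modEq_iff_dvd]
    have := hld.trans (dvd_im_oneAddSqrtd_pow_sub d r)
    rwa [h] at this
  exact eq_of_im_pow_eq_of_modEq hl hl0 hpow hld (Nat.prime_iff_prime_int.mp hl).not_dvd_one hb
    hre him hr (by simpa using h)

theorem im_oneAddSqrtd_pow_two_mul_add_one (d : ℤ) (s : ℕ) :
    (oneAddSqrtd d ^ (2 * s + 1)).im =
      ((oneAddSqrtd d ^ s).re + (oneAddSqrtd d ^ s).im) ^ 2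
        - (1 - d) * (oneAddSqrtd d ^ s).im ^ 2 := by
  rw [pow_succ, two_mul, pow_add]
  simp only [Zsqrtd.im_mul, Zsqrtd.re_mul]
  ring

theorem one_sub_pow_eq_re_sq_sub (d : ℤ) (s : ℕ) :
    (1 - d) ^ s = (oneAddSqrtd d ^ s).re ^ 2 - d * (oneAddSqrtd d ^ s).im ^ 2 := by
  have hnorm : (oneAddSqrtd d ^ s).norm = (oneAddSqrtd d).norm ^ s :=
    map_pow Zsqrtd.normMonoidHom _ _
  simp only [Zsqrtd.norm_def, mul_one] at hnorm
  linear_combination -hnorm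

end OneAddSqrtd

section Pell

theorem isFundamental_nine_four :
    Pell.IsFundamental (Pell.Solution₁.mk 9 4 (by norm_num) : Pell.Solution₁ 5) := by
  refine ⟨by norm_num, by norm_num, fun {b} hb ↦ ?_⟩
  by_contra! hlt
  rw [Pell.Solution₁.x_mk] at hlt
  have hprop := b.prop
  have hy : |b.y| < 4 := abs_lt_of_sq_lt_sq (by nlinarith) (by norm_num)
  obtain ⟨hy1, hy2⟩ := abs_lt.mp hy
  generalize b.x = x at *
  generalize b.y = y at *
  interval_cases x <;> interval_cases y <;> lia

theorem odd_of_five_dvd_re_nine_four_pow_add_one {n : ℕ} (h : 5 ∣ ((⟨9, 4⟩ : ℤ√5) ^ n).re + 1) :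
    Odd n := by
  by_contra hn
  obtain ⟨m, rfl⟩ := Nat.not_odd_iff_even.mp hn
  have hre := dvd_re_pow_sub (⟨9, 4⟩ : ℤ√5) (m + m)
  have h81 : (9 : ℤ) ^ (m + m) ≡ 1 [ZMOD 5] := by
    rw [← two_mul, pow_mul, ← one_pow (M := ℤ) m]
    exact Int.ModEq.pow m (by decide)
  have := Int.modEq_iff_dvd.mp h81
  simp only at hre
  lia

theorem five_dvd_of_five_dvd_im_nine_four_pow {n : ℕ} (h : 5 ∣ ((⟨9, 4⟩ : ℤ√5) ^ n).im) :
    5 ∣ n := by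
  cases n with
  | zero => exact dvd_zero 5
  | succ n =>
    have hdvd : (5 : ℤ) ∣ (n + 1) * 9 ^ n * 4 :=
      (dvd_sub_right h).mp (dvd_im_pow_succ_sub (⟨9, 4⟩ : ℤ√5) n)
    have hcop : IsCoprime (5 : ℤ) (9 ^ n * 4) :=
      (IsCoprime.pow_right (by norm_num)).mul_right (by norm_num)
    rw [mul_assoc] at hdvd
    exact_mod_cast hcop.dvd_of_dvd_mul_right hdvd

theorem forty_one_dvd_sq_add_of_five_dvd {z y : ℤ} (h : z ^ 2 - 5 * y ^ 2 = -1) (hy : 5 ∣ y) :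
    41 ∣ z ^ 2 + 5 * y ^ 2 := by
  let a : Pell.Solution₁ 5 := .mk (z ^ 2 + 5 * y ^ 2) (2 * |z * y|) (by
    rw [mul_pow, sq_abs]
    linear_combination (z ^ 2 - 5 * y ^ 2 - 1) * h)
  obtain ⟨n, hn⟩ := isFundamental_nine_four.eq_pow_of_nonneg (a := a)
    (by simp only [a, Pell.Solution₁.x_mk]; nlinarith)
    (by simp only [a, Pell.Solution₁.y_mk]; positivity)
  have hpow : (⟨z ^ 2 + 5 * y ^ 2, 2 * |z * y|⟩ : ℤ√5) = ⟨9, 4⟩ ^ n :=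
    (congrArg Subtype.val hn).trans (SubmonoidClass.coe_pow _ n)
  have hre : ((⟨9, 4⟩ : ℤ√5) ^ n).re = z ^ 2 + 5 * y ^ 2 := by rw [← hpow]
  have him : ((⟨9, 4⟩ : ℤ√5) ^ n).im = 2 * |z * y| := by rw [← hpow]
  have hodd : Odd n := odd_of_five_dvd_re_nine_four_pow_add_one (by rw [hre]; lia)
  have h5 : 5 ∣ n := five_dvd_of_five_dvd_im_nine_four_pow <| by
    rw [him]
    exact ((dvd_abs _ _).mpr (hy.mul_left z)).mul_left 2
  obtain ⟨m, rfl⟩ := h5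
  have hfive : (⟨9, 4⟩ : ℤ√5) ^ 5 = ⟨41 * 22689, 416020⟩ := by
    ext <;> norm_num [pow_succ]
  rw [← hre, pow_mul, hfive]
  exact dvd_re_pow_of_odd (dvd_mul_right _ _) (Nat.odd_mul.mp hodd).2

theorem isUnit_of_sq_sub_sq_eq_neg_one {z y : ℤ} (h : z ^ 2 - y ^ 2 = -1) : IsUnit y := by
  have hmul : (y - z) * (y + z) = 1 := by linear_combination -h
  rcases Int.eq_one_or_neg_one_of_mul_eq_one' hmul with h' | h' <;>
    exact Int.isUnit_iff.mpr (by lia)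

theorem sq_sub_five_pow_odd_mul_sq_ne_neg_one {b s : ℕ} (hb : b ≠ 0) {z y : ℤ}
    (hnorm : z ^ 2 - 2 * z * y + 5 ^ (2 * b + 1) * y ^ 2 = (5 ^ (2 * b + 1)) ^ s) :
    z ^ 2 - 5 ^ (2 * b + 1) * y ^ 2 ≠ -1 := by
  intro hpell
  have hpell' : z ^ 2 - 5 * (5 ^ b * y) ^ 2 = -1 := by linear_combination hpell
  have h41 : ((z ^ 2 + 5 * (5 ^ b * y) ^ 2 : ℤ) : ZMod 41) = 0 :=
    (ZMod.intCast_zmod_eq_zero_iff_dvd _ 41).mpr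
      (forty_one_dvd_sq_add_of_five_dvd hpell' ((dvd_pow_self 5 hb).mul_right y))
  have hpell41 := congrArg (Int.cast : ℤ → ZMod 41) hpell'
  have hnorm41 := congrArg (Int.cast : ℤ → ZMod 41) hnorm
  push_cast at h41 hpell41 hnorm41
  have h41zero : (41 : ZMod 41) = 0 := by decide
  have hY : (5 ^ b * y : ZMod 41) ^ 2 = -4 := by
    linear_combination -4 * (h41 - hpell41) + (5 ^ b * y : ZMod 41) ^ 2 * h41zero
  have hz : (z : ZMod 41) ^ 2 = 20 := by linear_combination h41 - 5 * hY
  have hcross : (2 * z * (5 ^ b * y) : ZMod 41) = -(5 ^ b * (5 ^ (2 * b + 1)) ^ s) := by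
    linear_combination 5 ^ b * (h41 - hnorm41)
  have hsq : ((5 : ZMod 41) ^ b * (5 ^ (2 * b + 1)) ^ s) ^ 2 = 8 := by
    rw [← neg_sq, ← hcross]
    linear_combination 4 * (5 ^ b * y : ZMod 41) ^ 2 * hz + 80 * hY - 8 * h41zero
  obtain ⟨w, hw⟩ : ∃ w : ZMod 41, 5 = w ^ 2 := ⟨13, by decide⟩
  have hfourth : (w ^ b * (w ^ (2 * b + 1)) ^ s) ^ 4 = 8 := by
    rw [← hsq, hw]
    ring
  exact (by decide : ∀ w : ZMod 41, w ^ 4 ≠ 8) _ hfourth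

theorem eq_one_of_sq_sub_five_pow_mul_sq_eq_neg_one {a s : ℕ} (ha : a ≠ 0) {z y : ℤ}
    (hpell : z ^ 2 - 5 ^ a * y ^ 2 = -1)
    (hnorm : z ^ 2 - 2 * z * y + 5 ^ a * y ^ 2 = (5 ^ a) ^ s) : a = 1 := by
  obtain ⟨b, rfl | rfl⟩ := Nat.even_or_odd' a
  · have hunit : IsUnit (5 ^ b * y) :=
      isUnit_of_sq_sub_sq_eq_neg_one (z := z) (by linear_combination hpell)
    have h5 : (5 : ℤ) ∣ 5 ^ b * y := (dvd_pow_self 5 (by lia)).mul_right y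
    exact absurd (isUnit_of_dvd_unit h5 hunit) (by decide)
  · by_contra hb
    exact sq_sub_five_pow_odd_mul_sq_ne_neg_one (by lia) hnorm hpell

end Pell

section Cases

variable {D r : ℕ}

theorem exists_odd_prime_dvd_of_mod_four_eq_two (hD : D % 4 = 2) (hD2 : D ≠ 2) :
    ∃ l : ℕ, l.Prime ∧ l ≠ 2 ∧ l ∣ D ∧ (l = 3 → D % 9 ≠ 3) := by
  by_cases h3 : 3 ∣ D ∧ D % 9 ≠ 3
  · exact ⟨3, Nat.prime_three, by norm_num, h3.1, fun _ ↦ h3.2⟩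
  · obtain ⟨n, hn1, hn2, hn3, hnD⟩ : ∃ n, n ≠ 1 ∧ ¬ 2 ∣ n ∧ ¬ 3 ∣ n ∧ n ∣ D := by
      by_cases hD3 : 3 ∣ D
      · exact ⟨D / 6, by lia, by lia, by lia, Nat.div_dvd_of_dvd (by lia)⟩
      · exact ⟨D / 2, by lia, by lia, by lia, Nat.div_dvd_of_dvd (by lia)⟩
    obtain ⟨l, hl, hln⟩ := Nat.exists_prime_and_dvd hn1
    exact ⟨l, hl, fun h ↦ hn2 (h ▸ hln), hln.trans hnD, fun h ↦ absurd (h ▸ hln) hn3⟩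

theorem eq_two_and_eq_three_of_im_oneAddSqrtd_pow (hD : D % 4 = 2) (hr : 1 < r)
    (h : (oneAddSqrtd (-D) ^ r).im = 1 ∨ (oneAddSqrtd (-D) ^ r).im = -1) : D = 2 ∧ r = 3 := by
  have heven : Even (-(D : ℤ)) := by rw [even_iff_two_dvd]; lia
  obtain ⟨hr3, hmod⟩ := modEq_three_of_im_oneAddSqrtd_pow heven hr h
  have him : (oneAddSqrtd (-D) ^ r).im = 1 := by
    rw [Int.ModEq] at hmod
    lia
  obtain rfl : D = 2 := by
    by_contra hD2
    obtain ⟨l, hl, hl2, hlD, hl3⟩ := exists_odd_prime_dvd_of_mod_four_eq_two hD hD2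
    have hlD' : (l : ℤ) ∣ -D := (Int.natCast_dvd_natCast.mpr hlD).neg_right
    exact hr.ne' (eq_one_of_im_oneAddSqrtd_pow_eq_one hl hl2 hlD'
      (fun h ↦ by have := hl3 h; lia) him)
  refine ⟨rfl, eq_of_im_oneAddSqrtd_pow_eq_of_even heven hr3 ?_⟩
  rw [him, oneAddSqrtd_pow_three]
  norm_num

theorem eq_five_of_dvd_two_pow_add_one {p n : ℕ} (hp : p.Prime) (hp2 : p ≠ 2) (hn : p - 1 ∣ n + 2)
    (h : p ∣ 2 ^ n + 1) : p = 5 := by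
  have hfermat : p ∣ 2 ^ (n + 2) - 1 := by
    have hcop : Nat.Coprime 2 p := (Nat.coprime_primes Nat.prime_two hp).mpr hp2.symm
    obtain ⟨c, hc⟩ := hn
    rw [hc, pow_mul, ← Nat.modEq_iff_dvd' (Nat.one_le_pow _ _ (by positivity))]
    simpa using ((Nat.ModEq.pow_card_sub_one_eq_one hp hcop).pow c).symm
  have h5 : p ∣ 5 := by
    have hsum : 4 * (2 ^ n + 1) = 5 + (2 ^ (n + 2) - 1) := by
      have := Nat.one_le_two_pow (n := n)
      rw [pow_add]
      lia
    exact (Nat.dvd_add_left hfermat).mp (hsum ▸ h.mul_left 4)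
  exact (Nat.prime_dvd_prime_iff_eq hp Nat.prime_five).mp h5

theorem eq_five_of_im_oneAddSqrtd_pow_eq_neg_one {p a s : ℕ} (hp : p.Prime) (hp2 : p ≠ 2)
    (ha : a ≠ 0) (hpa : p ^ a = 1 + D) (him : (oneAddSqrtd (-D) ^ (2 * s + 1)).im = -1) :
    p = 5 := by
  have hD : D ∣ 2 * s + 2 := by
    have hdvd := dvd_im_oneAddSqrtd_pow_sub (-D) (2 * s + 1)
    have hneg : -(-1 - ((2 * s + 1 : ℕ) : ℤ)) = (2 * s + 2 : ℕ) := by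
      push_cast
      ring
    rw [him, neg_dvd, ← dvd_neg, hneg] at hdvd
    exact_mod_cast hdvd
  have hp1 : p - 1 ∣ D := by
    simpa [hpa] using Nat.sub_dvd_pow_sub_pow p 1 a
  have hpow : 1 + D ∣ 2 ^ (2 * s) + 1 := by
    have hdvd := one_sub_dvd_im_oneAddSqrtd_pow_succ_sub (-D) (2 * s)
    have hneg : -(-1 - 2 ^ (2 * s) : ℤ) = 2 ^ (2 * s) + 1 := by ring
    rw [him, ← dvd_neg, hneg, sub_neg_eq_add] at hdvd
    exact_mod_cast hdvd
  exact eq_five_of_dvd_two_pow_add_one hp hp2 (hp1.trans hD)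
    ((dvd_pow_self p ha).trans (hpa ▸ hpow))

theorem eq_four_and_eq_three_of_im_oneAddSqrtd_pow (hD : D % 4 = 0) (hq : IsPrimePow (1 + D))
    (hr : 1 < r) (h : (oneAddSqrtd (-D) ^ r).im = 1 ∨ (oneAddSqrtd (-D) ^ r).im = -1) :
    D = 4 ∧ r = 3 := by
  have heven : Even (-(D : ℤ)) := by rw [even_iff_two_dvd]; lia
  obtain ⟨hr3, hmod⟩ := modEq_three_of_im_oneAddSqrtd_pow heven hr h
  have him : (oneAddSqrtd (-D) ^ r).im = -1 := by
    rw [Int.ModEq] at hmod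
    lia
  obtain ⟨p, a, hp, ha, hpa⟩ := (isPrimePow_nat_iff _).mp hq
  obtain rfl : D = 4 := by
    obtain ⟨s, rfl⟩ : ∃ s, r = 2 * s + 1 := ⟨r / 2, by rw [Nat.ModEq] at hr3; lia⟩
    have hp2 : p ≠ 2 := by
      rintro rfl
      have : 2 ∣ 1 + D := hpa ▸ dvd_pow_self 2 ha.ne'
      lia
    obtain rfl := eq_five_of_im_oneAddSqrtd_pow_eq_neg_one hp hp2 ha.ne' hpa him
    have hq5 : (5 : ℤ) ^ a = 1 - -D := by
      rw [sub_neg_eq_add]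
      exact_mod_cast hpa
    have hpell := im_oneAddSqrtd_pow_two_mul_add_one (-D) s
    have hnorm := one_sub_pow_eq_re_sq_sub (-D) s
    rw [him, ← hq5] at hpell
    rw [← hq5] at hnorm
    obtain rfl := eq_one_of_sq_sub_five_pow_mul_sq_eq_neg_one ha.ne' hpell.symm
      (by rw [hnorm, hq5]; ring)
    lia
  refine ⟨rfl, eq_of_im_oneAddSqrtd_pow_eq_of_even heven hr3 ?_⟩
  rw [him, oneAddSqrtd_pow_three]
  norm_num

end Cases

/-- Lemma 2.10: the equation `(1 + √-D)^r = m ± √-D` in `ℤ[√-D]` with integer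
`r > 1` has no solutions when `D ≡ 2 mod 4` except `D = 2, r = 3`, and none when
`D ≡ 0 mod 4` with `1 + D` a prime or prime power except `D = 4, r = 3`. -/
theorem stmt_15 :
    (∀ D : ℕ, 0 < D → D % 4 = 2 → ∀ r : ℕ, 1 < r → ∀ m : ℤ,
        ((⟨1, 1⟩ : ℤ√(-(D : ℤ))) ^ r = ⟨m, 1⟩ ∨
          (⟨1, 1⟩ : ℤ√(-(D : ℤ))) ^ r = ⟨m, -1⟩) →
        D = 2 ∧ r = 3) ∧
    (∀ D : ℕ, 0 < D → D % 4 = 0 → IsPrimePow (1 + D) → ∀ r : ℕ, 1 < r → ∀ m : ℤ,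
        ((⟨1, 1⟩ : ℤ√(-(D : ℤ))) ^ r = ⟨m, 1⟩ ∨
          (⟨1, 1⟩ : ℤ√(-(D : ℤ))) ^ r = ⟨m, -1⟩) →
        D = 4 ∧ r = 3) := by
  refine ⟨fun D _ hD r hr m h ↦ ?_, fun D _ hD hq r hr m h ↦ ?_⟩
  · exact eq_two_and_eq_three_of_im_oneAddSqrtd_pow hD hr
      (h.imp (congrArg Zsqrtd.im) (congrArg Zsqrtd.im))
  · exact eq_four_and_eq_three_of_im_oneAddSqrtd_pow hD hq hr
      (h.imp (congrArg Zsqrtd.im) (congrArg Zsqrtd.im))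
end

section
/- Let $m, n, x, y$ be positive integers with $m \neq x$, and let $d$ be an integer such that $3^m - 2^n = d$ and $3^x - 2^y = d$. Then $d = 1$, $d = -5$, or $d = -13$. -/
/-!
With `(x, y) = (m + a, n + b)` the coincidence reads `3 ^ m (3 ^ a - 1) = 2 ^ n (2 ^ b - 1)`. In
general, let `f (q ^ (2 B) - 1) = 4 (p ^ l - p ^ k)` and `E = f (4 p ^ k - f) > 4`. Then
`P ^ 2 + E = 4 p ^ (2 k)` and `P' ^ 2 + E q ^ (2 B) = 4 p ^ (2 l)` with `P = 2 p ^ k - f` and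
`P' = 2 p ^ l - f q ^ (2 B)`. Raised to the powers `l` and `k`, both become representations
`V ^ 2 + E U ^ 2 = 4 p ^ (2 k l)` with `V` prime to `p`, and such a representation is unique up to
signs, so that `U_l(P, p ^ (2 k)) = ± q ^ B U_k(P', p ^ (2 l))` for the Lucas sequence `U`. When
`q ^ 2 ∣ f`, the `q`-adic valuations of these Lucas numbers are those of their indices, hence
`v_q(l) = B + v_q(k)`. Here `(p, q)` is `(3, 2)` or `(2, 3)` according to the sign of
`3 ^ m - 2 ^ n`, and a power `q ^ (B + 1)` dividing `l` contradicts the size bound `l = O(B)`.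

This excludes `m ≥ 2`. For `m = 1` and `n ≥ 5` the multiplicative orders of `2` and `3` modulo
`32`, `41`, `31`, `7` and `9` force `8 ∣ a`, `20 ∣ b`, `30 ∣ a`, `3 ∣ b` and finally `m ≥ 2`.
-/

section LucasSequences

variable {R : Type*} [CommRing R]

/-- The Lucas sequence `U_k(P, Q)`. If `α` and `β` are the roots of `X ^ 2 - P X + Q`, then
`U_k = (α ^ k - β ^ k) / (α - β)`. -/
def lucasU (P Q : R) : ℕ → R
  | 0 => 0
  | 1 => 1
  | k + 2 => P * lucasU P Q (k + 1) - Q * lucasU P Q k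

/-- The companion Lucas sequence `V_k(P, Q) = α ^ k + β ^ k`, with `α` and `β` the roots of
`X ^ 2 - P X + Q`, encoded through `V_k = 2 U_{k+1} - P U_k`. -/
def lucasV (P Q : R) (k : ℕ) : R :=
  2 * lucasU P Q (k + 1) - P * lucasU P Q k

@[simp]
theorem lucasU_zero (P Q : R) : lucasU P Q 0 = 0 := rfl

@[simp]
theorem lucasU_one (P Q : R) : lucasU P Q 1 = 1 := rfl

theorem lucasU_add_two (P Q : R) (k : ℕ) :
    lucasU P Q (k + 2) = P * lucasU P Q (k + 1) - Q * lucasU P Q k := rfl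

theorem lucasU_add (P Q : R) (j k : ℕ) :
    lucasU P Q (j + k) = lucasU P Q j * lucasU P Q (k + 1) + lucasU P Q (j + 1) * lucasU P Q k -
      P * lucasU P Q j * lucasU P Q k := by
  induction j generalizing k with
  | zero => simp
  | succ j ih =>
    rw [add_assoc, add_comm 1 k, ih, lucasU_add_two, lucasU_add_two]
    ring

theorem lucasU_succ_sq_sub (P Q : R) (k : ℕ) :
    lucasU P Q (k + 1) ^ 2 - P * lucasU P Q (k + 1) * lucasU P Q k + Q * lucasU P Q k ^ 2 =
      Q ^ k := by
  induction k with
  | zero => simp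
  | succ k ih =>
    rw [lucasU_add_two, pow_succ Q, ← ih]
    ring

theorem lucasV_sq_sub (P Q : R) (k : ℕ) :
    lucasV P Q k ^ 2 - (P ^ 2 - 4 * Q) * lucasU P Q k ^ 2 = 4 * Q ^ k := by
  rw [← lucasU_succ_sq_sub P Q k, lucasV]
  ring

theorem lucasU_add_two_mul (P Q : R) (j k : ℕ) :
    lucasU P Q (j + 2 * k) = lucasV P Q k * lucasU P Q (j + k) - Q ^ k * lucasU P Q j := by
  rw [two_mul, ← add_assoc, lucasU_add P Q (j + k) k, add_right_comm, lucasU_add P Q (j + 1) k,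
    lucasU_add P Q j k, lucasU_add_two, ← lucasU_succ_sq_sub P Q k, lucasV]
  ring

theorem lucasU_mul (P Q : R) (k l : ℕ) :
    lucasU P Q (k * l) = lucasU P Q k * lucasU (lucasV P Q k) (Q ^ k) l := by
  induction l using Nat.twoStepInduction with
  | zero => simp
  | one => simp
  | more l ih ih' =>
    rw [mul_add, mul_comm k 2, lucasU_add_two_mul, ← Nat.mul_succ, ih, ih', lucasU_add_two]
    ring

theorem lucasU_zero_right_succ (P : R) (k : ℕ) : lucasU P 0 (k + 1) = P ^ k := by
  induction k with
  | zero => simp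
  | succ k ih => rw [lucasU_add_two, ih]; ring

theorem lucasV_zero_right {k : ℕ} (P : R) (hk : k ≠ 0) : lucasV P 0 k = P ^ k := by
  obtain ⟨k, rfl⟩ := Nat.exists_eq_succ_of_ne_zero hk
  rw [lucasV, Nat.succ_eq_add_one, lucasU_zero_right_succ, lucasU_zero_right_succ]
  ring

theorem lucasU_two_mul_sq_succ (a : R) (k : ℕ) :
    lucasU (2 * a) (a ^ 2) (k + 1) = (k + 1) * a ^ k := by
  induction k using Nat.twoStepInduction with
  | zero => simp
  | one => norm_num [lucasU_add_two]
  | more k ih ih' =>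
    rw [lucasU_add_two, ih, ih']
    push_cast
    ring

theorem lucasV_two_mul_sq (a : R) (k : ℕ) : lucasV (2 * a) (a ^ 2) k = 2 * a ^ k := by
  cases k with
  | zero => simp [lucasV]
  | succ k =>
    rw [lucasV, lucasU_two_mul_sq_succ, lucasU_two_mul_sq_succ]
    push_cast
    ring

theorem lucasU_modEq {N P P' Q Q' : ℤ} (hP : P ≡ P' [ZMOD N]) (hQ : Q ≡ Q' [ZMOD N]) (k : ℕ) :
    lucasU P Q k ≡ lucasU P' Q' k [ZMOD N] := by
  induction k using Nat.twoStepInduction with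
  | zero => rfl
  | one => rfl
  | more k ih ih' => exact (hP.mul ih').sub (hQ.mul ih)

theorem lucasV_modEq {N P P' Q Q' : ℤ} (hP : P ≡ P' [ZMOD N]) (hQ : Q ≡ Q' [ZMOD N]) (k : ℕ) :
    lucasV P Q k ≡ lucasV P' Q' k [ZMOD N] :=
  ((lucasU_modEq hP hQ (k + 1)).mul_left 2).sub (hP.mul (lucasU_modEq hP hQ k))

end LucasSequences

theorem not_dvd_lucasU {p P Q : ℤ} {k : ℕ} (hp : Prime p) (hP : ¬ p ∣ P) (hQ : p ∣ Q)
    (hk : k ≠ 0) : ¬ p ∣ lucasU P Q k := by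
  obtain ⟨k, rfl⟩ := Nat.exists_eq_succ_of_ne_zero hk
  have hmod := lucasU_modEq (Int.ModEq.refl P) (Int.modEq_zero_iff_dvd.2 hQ) (k + 1)
  rw [lucasU_zero_right_succ] at hmod
  rw [Nat.succ_eq_add_one, hmod.dvd_iff]
  exact fun h => hP (hp.dvd_of_dvd_pow h)

theorem not_dvd_lucasV {p P Q : ℤ} {k : ℕ} (hp : Prime p) (hP : ¬ p ∣ P) (hQ : p ∣ Q)
    (hk : k ≠ 0) : ¬ p ∣ lucasV P Q k := by
  have hmod := lucasV_modEq (Int.ModEq.refl P) (Int.modEq_zero_iff_dvd.2 hQ) k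
  rw [lucasV_zero_right P hk] at hmod
  rw [hmod.dvd_iff]
  exact fun h => hP (hp.dvd_of_dvd_pow h)

theorem lucasU_modEq_mul_pow {N P Q a : ℤ} (hP : P ≡ 2 * a [ZMOD N]) (hQ : Q ≡ a ^ 2 [ZMOD N])
    {k : ℕ} (hk : k ≠ 0) : lucasU P Q k ≡ k * a ^ (k - 1) [ZMOD N] := by
  obtain ⟨k, rfl⟩ := Nat.exists_eq_succ_of_ne_zero hk
  simpa [lucasU_two_mul_sq_succ] using lucasU_modEq hP hQ (k + 1)

theorem not_dvd_lucasU_of_not_dvd {q k : ℕ} (hq : q.Prime) {P Q a : ℤ} (ha : ¬ (q : ℤ) ∣ a)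
    (hP : P ≡ 2 * a [ZMOD q]) (hQ : Q ≡ a ^ 2 [ZMOD q]) (hk : ¬ q ∣ k) :
    ¬ (q : ℤ) ∣ lucasU P Q k := by
  have hq' := Nat.prime_iff_prime_int.1 hq
  have hk0 : k ≠ 0 := by rintro rfl; exact hk (dvd_zero q)
  rw [(lucasU_modEq_mul_pow hP hQ hk0).dvd_iff]
  intro h
  rcases hq'.dvd_or_dvd h with h | h
  · exact hk (Int.natCast_dvd_natCast.1 h)
  · exact ha (hq'.dvd_of_dvd_pow h)

theorem emultiplicity_lucasU_self {q : ℕ} (hq : q.Prime) {P Q a : ℤ} (ha : ¬ (q : ℤ) ∣ a)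
    (hP : P ≡ 2 * a [ZMOD q ^ 2]) (hQ : Q ≡ a ^ 2 [ZMOD q ^ 2]) :
    emultiplicity (q : ℤ) (lucasU P Q q) = 1 := by
  have hq' := Nat.prime_iff_prime_int.1 hq
  have hmod := lucasU_modEq_mul_pow hP hQ hq.ne_zero
  refine emultiplicity_eq_coe.2 ⟨?_, ?_⟩
  · rw [pow_one, (hmod.of_dvd (dvd_pow_self _ two_ne_zero)).dvd_iff]
    exact dvd_mul_right _ _
  · rw [one_add_one_eq_two, hmod.dvd_iff, sq,
      mul_dvd_mul_iff_left hq'.ne_zero]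
    exact fun h => ha (hq'.dvd_of_dvd_pow h)

-- `X ^ 2 - P X + Q ≡ (X - a) ^ 2 [ZMOD q ^ 2]` passes to the polynomial with roots `α ^ q, β ^ q`,
-- so that factors `q` can be split off the index one at a time.
theorem emultiplicity_lucasU {q : ℕ} (hq : q.Prime) {P Q a : ℤ} (ha : ¬ (q : ℤ) ∣ a)
    (hP : P ≡ 2 * a [ZMOD q ^ 2]) (hQ : Q ≡ a ^ 2 [ZMOD q ^ 2]) (k : ℕ) :
    emultiplicity (q : ℤ) (lucasU P Q k) = emultiplicity q k := by
  induction k using Nat.strong_induction_on generalizing P Q a with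
  | h k ih =>
    have hq' := Nat.prime_iff_prime_int.1 hq
    rcases eq_or_ne k 0 with rfl | hk
    · simp
    by_cases hqk : q ∣ k
    · obtain ⟨j, rfl⟩ := hqk
      have hj : j < q * j :=
        lt_mul_of_one_lt_left (Nat.pos_of_ne_zero (right_ne_zero_of_mul hk)) hq.one_lt
      have hV : lucasV P Q q ≡ 2 * a ^ q [ZMOD q ^ 2] := by
        simpa [lucasV_two_mul_sq] using lucasV_modEq hP hQ q
      have hQq : Q ^ q ≡ (a ^ q) ^ 2 [ZMOD q ^ 2] := by
        rw [pow_right_comm]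
        exact hQ.pow q
      rw [lucasU_mul, emultiplicity_mul hq', emultiplicity_lucasU_self hq ha hP hQ,
        ih j hj (fun h => ha (hq'.dvd_of_dvd_pow h)) hV hQq, emultiplicity_mul hq.prime,
        (Nat.finiteMultiplicity_iff.2 ⟨hq.ne_one, hq.pos⟩).emultiplicity_self]
    · rw [emultiplicity_eq_zero.2 hqk, emultiplicity_eq_zero]
      exact not_dvd_lucasU_of_not_dvd hq ha (hP.of_dvd (dvd_pow_self _ two_ne_zero))
        (hQ.of_dvd (dvd_pow_self _ two_ne_zero)) hqk

theorem eq_zero_of_sq_add_mul_sq_eq_of_dvd {E N X C : ℤ} (hE : 4 < E) (hN : N ≠ 0)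
    (h : X ^ 2 + E * C ^ 2 = 4 * N ^ 2) (hdvd : N ∣ C) : C = 0 := by
  obtain ⟨s, rfl⟩ := hdvd
  by_contra hs
  have hs' : 0 < s ^ 2 := by
    have := right_ne_zero_of_mul hs
    positivity
  have hN' : 0 < N ^ 2 := by positivity
  nlinarith [sq_nonneg X, mul_pos hN' hs']

theorem even_mul_sub_mul_of_sq_add_mul_sq_eq {E M M' V U V' U' : ℤ}
    (h : V ^ 2 + E * U ^ 2 = 4 * M) (h' : V' ^ 2 + E * U' ^ 2 = 4 * M') :
    Even (V * U' - V' * U) := by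
  have hpar := congrArg Even h
  have hpar' := congrArg Even h'
  simp only [Int.even_add, Int.even_mul, Int.even_sub, Int.even_pow, eq_iff_iff,
    show Even (4 : ℤ) by decide] at hpar hpar' ⊢
  tauto

theorem two_mul_pow_dvd_or_of_sq_add_mul_sq_eq {p E V U V' U' : ℤ} {k : ℕ} (hp : Prime p)
    (h : V ^ 2 + E * U ^ 2 = 4 * p ^ k) (h' : V' ^ 2 + E * U' ^ 2 = 4 * p ^ k)
    (hV : ¬ p ∣ V) (hU' : ¬ p ∣ U') :
    2 * p ^ k ∣ V * U' - V' * U ∨ 2 * p ^ k ∣ V * U' + V' * U := by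
  obtain ⟨A, hA⟩ := even_mul_sub_mul_of_sq_add_mul_sq_eq h h'
  have hB : V * U' + V' * U = 2 * (V * U' - A) := by linear_combination -hA
  have hfour : 4 * (A * (V * U' - A)) = 4 * (p ^ k * (U' ^ 2 - U ^ 2)) := by
    linear_combination U' ^ 2 * h - U ^ 2 * h' + (2 * A - V * U' - V' * U) * hA
  have hprod : p ^ k ∣ A * (V * U' - A) := ⟨_, mul_left_cancel₀ four_ne_zero hfour⟩
  rw [hA, hB, ← two_mul, mul_dvd_mul_iff_left two_ne_zero, mul_dvd_mul_iff_left two_ne_zero]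
  by_cases hpA : p ∣ A
  · have hpB : ¬ p ∣ V * U' - A := by
      rw [dvd_sub_left hpA]
      exact fun h => (hp.dvd_or_dvd h).elim hV hU'
    exact Or.inl (hp.pow_dvd_of_dvd_mul_right k hpB hprod)
  · exact Or.inr (hp.pow_dvd_of_dvd_mul_left k hpA hprod)

-- The composition identities `(V V' ± E U U') ^ 2 + E (V U' ∓ V' U) ^ 2 = 16 p ^ (2 k)` leave no
-- room for a nonzero multiple of `2 p ^ k` in the second square.
theorem sq_eq_sq_of_sq_add_mul_sq_eq {p E V U V' U' : ℤ} {k : ℕ} (hp : Prime p) (hE : 4 < E)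
    (h : V ^ 2 + E * U ^ 2 = 4 * p ^ k) (h' : V' ^ 2 + E * U' ^ 2 = 4 * p ^ k)
    (hV : ¬ p ∣ V) (hU' : ¬ p ∣ U') : U ^ 2 = U' ^ 2 := by
  have hN : 2 * p ^ k ≠ 0 := mul_ne_zero two_ne_zero (pow_ne_zero k hp.ne_zero)
  have hcross : (V * U' - V' * U) * (V * U' + V' * U) = 0 := by
    rcases two_mul_pow_dvd_or_of_sq_add_mul_sq_eq hp h h' hV hU' with hdvd | hdvd
    · rw [eq_zero_of_sq_add_mul_sq_eq_of_dvd (X := V * V' + E * U * U') hE hN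
        (by linear_combination (V' ^ 2 + E * U' ^ 2) * h + 4 * p ^ k * h') hdvd, zero_mul]
    · rw [eq_zero_of_sq_add_mul_sq_eq_of_dvd (X := V * V' - E * U * U') hE hN
        (by linear_combination (V' ^ 2 + E * U' ^ 2) * h + 4 * p ^ k * h') hdvd, mul_zero]
  have hmul : 4 * p ^ k * (U ^ 2 - U' ^ 2) = 0 := by
    linear_combination -hcross + U' ^ 2 * h - U ^ 2 * h'
  exact sub_eq_zero.1 ((mul_eq_zero.1 hmul).resolve_left
    (mul_ne_zero four_ne_zero (pow_ne_zero k hp.ne_zero)))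

theorem lucasU_sq_eq {p E P P' r : ℤ} {K L k l : ℕ} (hp : Prime p) (hE : 4 < E)
    (h : P ^ 2 + E = 4 * p ^ K) (h' : P' ^ 2 + E * r ^ 2 = 4 * p ^ L)
    (hP : ¬ p ∣ P) (hP' : ¬ p ∣ P') (hr : ¬ p ∣ r) (hK : K ≠ 0) (hL : L ≠ 0)
    (hl : l ≠ 0) (hk : k ≠ 0) (hKL : K * l = L * k) :
    lucasU P (p ^ K) l ^ 2 = (r * lucasU P' (p ^ L) k) ^ 2 := by
  have hV := lucasV_sq_sub P (p ^ K) l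
  have hV' := lucasV_sq_sub P' (p ^ L) k
  rw [← pow_mul] at hV hV'
  refine sq_eq_sq_of_sq_add_mul_sq_eq (V := lucasV P (p ^ K) l) (V' := lucasV P' (p ^ L) k)
    hp hE (k := K * l) ?_ ?_ (not_dvd_lucasV hp hP (dvd_pow_self p hK) hl) ?_
  · linear_combination hV + lucasU P (p ^ K) l ^ 2 * h
  · rw [hKL]
    linear_combination hV' + lucasU P' (p ^ L) k ^ 2 * h'
  · exact fun hdvd => (hp.dvd_or_dvd hdvd).elim hr (not_dvd_lucasU hp hP' (dvd_pow_self p hL) hk)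

theorem pow_succ_dvd_of_emultiplicity_eq_add {q k l B : ℕ} (hB : B ≠ 0) (hkl : k ≡ l [MOD q])
    (h : emultiplicity q l = B + emultiplicity q k) : q ^ (B + 1) ∣ l := by
  have hl : q ^ B ∣ l := pow_dvd_of_le_emultiplicity (h ▸ le_self_add)
  have hk : q ∣ k := (hkl.dvd_iff dvd_rfl).2 ((dvd_pow_self q hB).trans hl)
  have hone : 1 ≤ emultiplicity q k := le_emultiplicity_of_pow_dvd (by simpa using hk)
  refine pow_dvd_of_le_emultiplicity ?_
  rw [h, Nat.cast_add]
  exact add_le_add_right hone _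

theorem not_natCast_dvd_natCast_pow {p q : ℕ} (hp : p.Prime) (hq : q.Prime) (hpq : p ≠ q)
    (j : ℕ) : ¬ (p : ℤ) ∣ (q : ℤ) ^ j := by
  exact_mod_cast fun h => hpq ((Nat.prime_dvd_prime_iff_eq hp hq).1 (hp.dvd_of_dvd_pow h))

theorem emultiplicity_eq_add_of_sub_eq_sub {p q k l B : ℕ} {f : ℤ} (hp : p.Prime) (hq : q.Prime)
    (hpq : p ≠ q) (hk : k ≠ 0) (hl : l ≠ 0) (hf : 4 < f) (hpf : ¬ (p : ℤ) ∣ f)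
    (hqf : (q : ℤ) ^ 2 ∣ f) (hfk : f < 4 * (p : ℤ) ^ k)
    (h : 4 * (p : ℤ) ^ k - f = 4 * (p : ℤ) ^ l - f * ((q : ℤ) ^ B) ^ 2) :
    emultiplicity q l = B + emultiplicity q k := by
  have hp' := Nat.prime_iff_prime_int.1 hp
  have hq' := Nat.prime_iff_prime_int.1 hq
  have hpqB := not_natCast_dvd_natCast_pow hp hq hpq B
  have hpP {j : ℕ} {g : ℤ} (hj : j ≠ 0) (hg : ¬ (p : ℤ) ∣ g) :
      ¬ (p : ℤ) ∣ 2 * (p : ℤ) ^ j - g := by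
    rwa [dvd_sub_right ((dvd_pow_self _ hj).mul_left 2)]
  have hP {j : ℕ} {g : ℤ} (hg : (q : ℤ) ^ 2 ∣ g) :
      2 * (p : ℤ) ^ j - g ≡ 2 * (p : ℤ) ^ j [ZMOD q ^ 2] :=
    Int.modEq_iff_dvd.2 (by simpa using hg)
  have hQ (j : ℕ) : (p : ℤ) ^ (2 * j) ≡ ((p : ℤ) ^ j) ^ 2 [ZMOD q ^ 2] := by
    rw [← pow_mul, mul_comm]
  have hnorm : (2 * (p : ℤ) ^ k - f) ^ 2 + f * (4 * p ^ k - f) = 4 * p ^ (2 * k) := by ring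
  have hnorm' : (2 * (p : ℤ) ^ l - f * (q ^ B) ^ 2) ^ 2 + f * (4 * p ^ k - f) * (q ^ B) ^ 2 =
      4 * p ^ (2 * l) := by
    rw [h]
    ring
  have hsq : lucasU (2 * (p : ℤ) ^ k - f) ((p : ℤ) ^ (2 * k)) l ^ 2 =
      ((q : ℤ) ^ B * lucasU (2 * (p : ℤ) ^ l - f * (q ^ B) ^ 2)
        ((p : ℤ) ^ (2 * l)) k) ^ 2 :=
    lucasU_sq_eq hp' (by nlinarith) hnorm hnorm' (hpP hk hpf)
      (hpP hl fun hdvd => (hp'.dvd_or_dvd hdvd).elim hpf (mt hp'.dvd_of_dvd_pow hpqB))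
      hpqB (by positivity) (by positivity) hl hk (by ring)
  have hU := emultiplicity_lucasU hq (not_natCast_dvd_natCast_pow hq hp hpq.symm k)
    (hP hqf) (hQ k) l
  have hU' := emultiplicity_lucasU hq (not_natCast_dvd_natCast_pow hq hp hpq.symm l)
    (hP (hqf.mul_right (((q : ℤ) ^ B) ^ 2))) (hQ l) k
  rw [← hU, emultiplicity_eq_of_associated_right
    (Int.associated_iff.2 (sq_eq_sq_iff_eq_or_eq_neg.1 hsq)), emultiplicity_mul hq',
    emultiplicity_pow_self_of_prime hq', hU']

theorem natCast_dvd_pow_sub_one_iff_dvd {M r a : ℕ} {g : ℤ} (hr : 0 < r)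
    (h : (g : ZMod M) ^ r = 1 ∧ ∀ i < r, 0 < i → (g : ZMod M) ^ i ≠ 1) :
    (M : ℤ) ∣ g ^ a - 1 ↔ r ∣ a := by
  rw [← (orderOf_eq_iff hr).2 h, orderOf_dvd_iff_pow_eq_one, ← ZMod.intCast_zmod_eq_zero_iff_dvd,
    Int.cast_sub, Int.cast_pow, Int.cast_one, sub_eq_zero]

theorem dvd_iff_dvd_of_mul_eq_mul {R : Type*} [CommSemiring R] {M u v s t : R}
    (hu : IsCoprime M u) (hv : IsCoprime M v) (h : u * s = v * t) : M ∣ s ↔ M ∣ t :=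
  ⟨fun hs => hv.dvd_of_dvd_mul_left (h ▸ hs.mul_left u),
    fun ht => hu.dvd_of_dvd_mul_left (h ▸ ht.mul_left v)⟩

theorem pow_dvd_pow_sub_one_iff_le {p q : ℤ} {m n a b k : ℕ} (hpq : IsCoprime p q) (hq : q ≠ 0)
    (hq' : ¬ IsUnit q) (hb : b ≠ 0) (h : p ^ m * (p ^ a - 1) = q ^ n * (q ^ b - 1)) :
    q ^ k ∣ p ^ a - 1 ↔ k ≤ n := by
  have hcop : IsCoprime q (q ^ b - 1) :=
    ⟨q ^ (b - 1), -1, by rw [pow_sub_one_mul hb]; ring⟩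
  rw [dvd_iff_dvd_of_mul_eq_mul hpq.symm.pow (hcop.pow_left (m := k))
    (h.trans (mul_comm _ _)), pow_dvd_pow_iff hq hq']

theorem mul_lt_sq_of_mul_sub_one_eq {u v s t : ℤ} (huv : IsCoprime u v) (hv : 0 < v)
    (hvu : v < u) (ht : 1 < t) (h : u * (s - 1) = v * (t - 1)) : u * s < t ^ 2 := by
  have hut : u ≤ t - 1 := Int.le_of_dvd (by lia) (huv.dvd_of_dvd_mul_left ⟨s - 1, h.symm⟩)
  calc u * s = v * (t - 1) + u := by linear_combination h
    _ < u * (t - 1) + u := by gcongr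
    _ = u * t := by ring
    _ ≤ t ^ 2 := by nlinarith

theorem four_mul_le_two_pow_succ (k : ℕ) : 4 * k ≤ 2 ^ (k + 1) := by
  cases k with
  | zero => simp
  | succ k => grind [Nat.lt_two_pow_self (n := k)]

theorem eight_mul_le_three_pow_succ (k : ℕ) : 8 * k ≤ 3 ^ (k + 1) := by
  rcases k.eq_zero_or_pos with rfl | hk
  · simp
  induction k, hk using Nat.le_induction with
  | base => simp
  | succ k hk ih => rw [pow_succ]; lia

/-- The coincidence `3 ^ m - 2 ^ n = 3 ^ (m + a) - 2 ^ (n + b)` of two distinct differences,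
encoded as `3 ^ m (3 ^ a - 1) = 2 ^ n (2 ^ b - 1)` with nonzero `a` and `b`. -/
structure DifferenceCoincidence (m n a b : ℕ) : Prop where
  a_ne_zero : a ≠ 0
  b_ne_zero : b ≠ 0
  mul_eq_mul : (3 : ℤ) ^ m * (3 ^ a - 1) = 2 ^ n * (2 ^ b - 1)

namespace DifferenceCoincidence

variable {m n a b : ℕ}

theorem two_pow_dvd_iff (h : DifferenceCoincidence m n a b) (k : ℕ) :
    (2 : ℤ) ^ k ∣ 3 ^ a - 1 ↔ k ≤ n :=
  pow_dvd_pow_sub_one_iff_le (by norm_num) (by norm_num) (by norm_num [Int.isUnit_iff])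
    h.b_ne_zero h.mul_eq_mul

theorem three_pow_dvd_iff (h : DifferenceCoincidence m n a b) (k : ℕ) :
    (3 : ℤ) ^ k ∣ 2 ^ b - 1 ↔ k ≤ m :=
  pow_dvd_pow_sub_one_iff_le (by norm_num) (by norm_num) (by norm_num [Int.isUnit_iff])
    h.a_ne_zero h.mul_eq_mul.symm

theorem dvd_iff_dvd (h : DifferenceCoincidence m n a b) {M : ℤ} (h3 : IsCoprime M 3)
    (h2 : IsCoprime M 2) : M ∣ 3 ^ a - 1 ↔ M ∣ 2 ^ b - 1 :=
  dvd_iff_dvd_of_mul_eq_mul h3.pow_right h2.pow_right h.mul_eq_mul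

theorem two_dvd_a_iff_two_le_n (h : DifferenceCoincidence m n a b) : 2 ∣ a ↔ 2 ≤ n :=
  (natCast_dvd_pow_sub_one_iff_dvd (M := 4) (g := 3) (by decide) (by decide)).symm.trans
    (h.two_pow_dvd_iff 2)

theorem two_dvd_a_iff_three_le_n (h : DifferenceCoincidence m n a b) : 2 ∣ a ↔ 3 ≤ n :=
  (natCast_dvd_pow_sub_one_iff_dvd (M := 8) (g := 3) (by decide) (by decide)).symm.trans
    (h.two_pow_dvd_iff 3)

theorem eight_dvd_a_iff_five_le_n (h : DifferenceCoincidence m n a b) : 8 ∣ a ↔ 5 ≤ n :=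
  (natCast_dvd_pow_sub_one_iff_dvd (M := 32) (g := 3) (by decide) (by decide)).symm.trans
    (h.two_pow_dvd_iff 5)

theorem two_dvd_b_iff_one_le_m (h : DifferenceCoincidence m n a b) : 2 ∣ b ↔ 1 ≤ m :=
  (natCast_dvd_pow_sub_one_iff_dvd (M := 3) (g := 2) (by decide) (by decide)).symm.trans
    (h.three_pow_dvd_iff 1)

theorem six_dvd_b_iff_two_le_m (h : DifferenceCoincidence m n a b) : 6 ∣ b ↔ 2 ≤ m :=
  (natCast_dvd_pow_sub_one_iff_dvd (M := 9) (g := 2) (by decide) (by decide)).symm.trans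
    (h.three_pow_dvd_iff 2)

theorem six_dvd_a_iff_three_dvd_b (h : DifferenceCoincidence m n a b) : 6 ∣ a ↔ 3 ∣ b := by
  rw [← natCast_dvd_pow_sub_one_iff_dvd (M := 7) (g := 3) (by decide) (by decide),
    ← natCast_dvd_pow_sub_one_iff_dvd (M := 7) (g := 2) (by decide) (by decide)]
  exact h.dvd_iff_dvd (by norm_num) (by norm_num)

theorem thirty_dvd_a_iff_five_dvd_b (h : DifferenceCoincidence m n a b) :
    30 ∣ a ↔ 5 ∣ b := by
  rw [← natCast_dvd_pow_sub_one_iff_dvd (M := 31) (g := 3) (by decide) (by decide),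
    ← natCast_dvd_pow_sub_one_iff_dvd (M := 31) (g := 2) (by decide) (by decide)]
  exact h.dvd_iff_dvd (by norm_num) (by norm_num)

theorem eight_dvd_a_iff_twenty_dvd_b (h : DifferenceCoincidence m n a b) :
    8 ∣ a ↔ 20 ∣ b := by
  rw [← natCast_dvd_pow_sub_one_iff_dvd (M := 41) (g := 3) (by decide) (by decide),
    ← natCast_dvd_pow_sub_one_iff_dvd (M := 41) (g := 2) (by decide) (by decide)]
  exact h.dvd_iff_dvd (by norm_num) (by norm_num)

theorem three_le_n_of_two_le_m (h : DifferenceCoincidence m n a b) (hm : 2 ≤ m) : 3 ≤ n := by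
  have ha := h.six_dvd_a_iff_three_dvd_b.2
    ((by norm_num : 3 ∣ 6).trans (h.six_dvd_b_iff_two_le_m.2 hm))
  exact h.two_dvd_a_iff_three_le_n.1 ((by norm_num : 2 ∣ 6).trans ha)

theorem n_ne_two (h : DifferenceCoincidence m n a b) : n ≠ 2 := by
  rintro rfl
  exact absurd (h.two_dvd_a_iff_three_le_n.1 (h.two_dvd_a_iff_two_le_n.2 le_rfl)) (by norm_num)

theorem two_le_m_of_five_le_n (h : DifferenceCoincidence m n a b) (hm : 1 ≤ m) (hn : 5 ≤ n) :
    2 ≤ m := by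
  have hb20 : 20 ∣ b := h.eight_dvd_a_iff_twenty_dvd_b.1 (h.eight_dvd_a_iff_five_le_n.2 hn)
  have ha30 : 30 ∣ a := h.thirty_dvd_a_iff_five_dvd_b.2 ((by norm_num : 5 ∣ 20).trans hb20)
  have hb3 : 3 ∣ b := h.six_dvd_a_iff_three_dvd_b.1 ((by norm_num : 6 ∣ 30).trans ha30)
  have hb2 : 2 ∣ b := h.two_dvd_b_iff_one_le_m.2 hm
  exact h.six_dvd_b_iff_two_le_m.1 (by lia)

theorem three_pow_add_lt (h : DifferenceCoincidence m n a b) (hlt : 2 ^ n < 3 ^ m) :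
    3 ^ (m + a) < 2 ^ (2 * b) := by
  have hsize := mul_lt_sq_of_mul_sub_one_eq (u := 3 ^ m) (v := 2 ^ n) (s := 3 ^ a) (t := 2 ^ b)
    (IsCoprime.pow (by norm_num)) (by positivity) (mod_cast hlt)
    (one_lt_pow₀ one_lt_two h.b_ne_zero) h.mul_eq_mul
  rw [← pow_add, ← pow_mul, mul_comm b] at hsize
  exact_mod_cast hsize

theorem two_pow_add_lt (h : DifferenceCoincidence m n a b) (hlt : 3 ^ m < 2 ^ n) :
    2 ^ (n + b) < 3 ^ (2 * a) := by
  have hsize := mul_lt_sq_of_mul_sub_one_eq (u := 2 ^ n) (v := 3 ^ m) (s := 2 ^ b) (t := 3 ^ a)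
    (IsCoprime.pow (by norm_num)) (by positivity) (mod_cast hlt)
    (one_lt_pow₀ (by norm_num) h.a_ne_zero) h.mul_eq_mul.symm
  rw [← pow_add, ← pow_mul, mul_comm a] at hsize
  exact_mod_cast hsize

theorem three_pow_le_two_pow (h : DifferenceCoincidence m n a b) (hm : m ≠ 0) (hn : 3 ≤ n) :
    3 ^ m ≤ 2 ^ n := by
  by_contra! hlt
  have ha : 2 ∣ a := h.two_dvd_a_iff_three_le_n.2 hn
  obtain ⟨B, rfl⟩ : 2 ∣ b := h.two_dvd_b_iff_one_le_m.2 (Nat.one_le_iff_ne_zero.2 hm)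
  have hB : B ≠ 0 := right_ne_zero_of_mul h.b_ne_zero
  have hval := emultiplicity_eq_add_of_sub_eq_sub (p := 3) (q := 2) (k := m) (l := m + a) (B := B)
    (f := 2 ^ (n + 2)) Nat.prime_three Nat.prime_two (by norm_num) hm (by lia)
    (by calc (4 : ℤ) = 2 ^ 2 := by norm_num
          _ < 2 ^ (n + 2) := pow_lt_pow_right₀ one_lt_two (by lia))
    (mt Int.prime_three.dvd_of_dvd_pow (by norm_num)) (pow_dvd_pow 2 (Nat.le_add_left 2 n))
    (by rw [pow_add]; norm_cast; linarith) (by linear_combination -4 * h.mul_eq_mul)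
  have hdvd : 2 ^ (B + 1) ∣ m + a :=
    pow_succ_dvd_of_emultiplicity_eq_add hB (by simpa [Nat.modEq_iff_dvd] using mod_cast ha) hval
  have hle : 2 ^ (B + 1) ≤ m + a := Nat.le_of_dvd (by lia) hdvd
  have hlt' : m + a < 2 * (2 * B) := (Nat.pow_lt_pow_iff_right one_lt_two).1
    ((Nat.pow_le_pow_left (by norm_num) _).trans_lt (h.three_pow_add_lt hlt))
  linarith [four_mul_le_two_pow_succ B]

theorem two_pow_le_three_pow (h : DifferenceCoincidence m n a b) (hm : 2 ≤ m) :
    2 ^ n ≤ 3 ^ m := by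
  by_contra! hlt
  have hn : 3 ≤ n := h.three_le_n_of_two_le_m hm
  have hb : 3 ∣ b := (by norm_num : 3 ∣ 6).trans (h.six_dvd_b_iff_two_le_m.2 hm)
  obtain ⟨c, rfl⟩ : 2 ∣ a := h.two_dvd_a_iff_three_le_n.2 hn
  obtain ⟨k, rfl⟩ : ∃ k, n = k + 2 := ⟨n - 2, by lia⟩
  have hc : c ≠ 0 := right_ne_zero_of_mul h.a_ne_zero
  have hval := emultiplicity_eq_add_of_sub_eq_sub (p := 2) (q := 3) (k := k) (l := k + b) (B := c)
    (f := 3 ^ m) Nat.prime_two Nat.prime_three (by norm_num) (by lia) (by lia)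
    (by calc (4 : ℤ) < 3 ^ 2 := by norm_num
          _ ≤ 3 ^ m := pow_le_pow_right₀ (by norm_num) hm)
    (mt Int.prime_two.dvd_of_dvd_pow (by norm_num)) (pow_dvd_pow 3 hm)
    (by rw [pow_add, mul_comm] at hlt; exact_mod_cast hlt)
    (by linear_combination h.mul_eq_mul)
  have hdvd : 3 ^ (c + 1) ∣ k + b :=
    pow_succ_dvd_of_emultiplicity_eq_add hc (by simpa [Nat.modEq_iff_dvd] using mod_cast hb) hval
  have hle : 3 ^ (c + 1) ≤ k + b := Nat.le_of_dvd (by lia) hdvd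
  have hlt' : k + 2 + b < 2 * (2 * (2 * c)) := (Nat.pow_lt_pow_iff_right one_lt_two).1 <|
    calc 2 ^ (k + 2 + b) < 3 ^ (2 * (2 * c)) := h.two_pow_add_lt hlt
      _ ≤ 4 ^ (2 * (2 * c)) := Nat.pow_le_pow_left (by norm_num) _
      _ = 2 ^ (2 * (2 * (2 * c))) := (pow_mul 2 2 _).symm
  linarith [eight_mul_le_three_pow_succ c]

theorem m_eq_one (h : DifferenceCoincidence m n a b) (hm : m ≠ 0) : m = 1 := by
  by_contra hm1
  have hm2 : 2 ≤ m := by lia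
  have hn3 : 3 ≤ n := h.three_le_n_of_two_le_m hm2
  have heq : 3 ^ m = 2 ^ n :=
    (h.three_pow_le_two_pow hm hn3).antisymm (h.two_pow_le_three_pow hm2)
  have hodd : Odd (3 ^ m) := Odd.pow (by decide)
  have heven : Even (2 ^ n) := even_two.pow_of_ne_zero (by lia)
  exact Nat.not_even_iff_odd.2 hodd (heq ▸ heven)

theorem n_eq_one_or_three_or_four (h : DifferenceCoincidence m n a b) (hm : m ≠ 0) (hn : n ≠ 0) :
    n = 1 ∨ n = 3 ∨ n = 4 := by
  have hn2 : n ≠ 2 := h.n_ne_two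
  have hn5 : n < 5 := by
    by_contra! hn5
    linarith [h.m_eq_one hm, h.two_le_m_of_five_le_n (Nat.one_le_iff_ne_zero.2 hm) hn5]
  lia

end DifferenceCoincidence

/-- Lemma 2.11: if `3^m - 2^n = 3^x - 2^y = d` with positive integers `m ≠ x`,
then `d = 1`, `-5`, or `-13`. -/
theorem stmt_16 (m n x y : ℕ) (hm : 0 < m) (hn : 0 < n) (hx : 0 < x) (hy : 0 < y)
    (hmx : m ≠ x) (d : ℤ)
    (h1 : (3 : ℤ) ^ m - 2 ^ n = d) (h2 : (3 : ℤ) ^ x - 2 ^ y = d) :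
    d = 1 ∨ d = -5 ∨ d = -13 := by
  wlog hlt : m < x generalizing m n x y
  · exact this x y m n hx hy hm hn hmx.symm h2 h1 (by lia)
  have hny : n < y := by
    have := pow_lt_pow_right₀ (show (1 : ℤ) < 3 by norm_num) hlt
    exact (pow_lt_pow_iff_right₀ (show (1 : ℤ) < 2 by norm_num)).1 (by linarith)
  obtain ⟨a, rfl⟩ := Nat.exists_eq_add_of_lt hlt
  obtain ⟨b, rfl⟩ := Nat.exists_eq_add_of_lt hny
  have h : DifferenceCoincidence m n (a + 1) (b + 1) :=
    ⟨a.succ_ne_zero, b.succ_ne_zero, by linear_combination h2 - h1⟩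
  obtain rfl := h.m_eq_one hm.ne'
  rcases h.n_eq_one_or_three_or_four one_ne_zero hn.ne' with rfl | rfl | rfl <;>
    norm_num [← h1]
end

section
/- Let $a$, $b$, $c$ be coprime positive integers with $\min\{a,b,c\} > 1$, where $a \equiv 2 \pmod 3$, $3 \nmid b$, and $c$ is an odd prime. If the equation $a^x + b^y = c^z$ has more than one solution in positive integers $(x,y,z)$, then it has exactly two solutions $(x_1,y_1,z_1)$ and $(x_2,y_2,z_2)$, and these satisfy $y_1 \not\equiv y_2 \pmod 2$. -/
/-!
Write a solution of `a ^ x + b ^ y = c ^ z` as an element `P * √A + Q * √(-B)` of norm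
`P ^ 2 * A + Q ^ 2 * B = c ^ z`, with `A = a ^ (x % 2)`, `B = b ^ (y % 2)`, `P = a ^ (x / 2)` and
`Q = b ^ (y / 2)`. Among the elements with `a ∣ P * A`, `b ∣ Q * B`, `¬ c ∣ P` and norm a power of
`c`, take one of smallest norm. Up to conjugation and sign, every other one is an odd power of it:
dividing by its square lowers the norm until the smallest norm is reached. If the odd power is not
trivial, then it is a power of prime exponent of an intermediate element, and one of its two
coefficients has a prime factor that does not divide `a`, respectively `b`; so it does not come from
a solution. Hence the parities of `x` and `y` determine the solution. Modulo 3, the parity of `y`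
determines that of `x`, which leaves at most one solution for each parity of `y`.
-/

theorem choose_add_two (m k : ℕ) :
    (m + 2).choose (k + 2) = m.choose k + 2 * m.choose (k + 1) + m.choose (k + 2) := by
  simp only [Nat.choose_succ_succ']
  ring

/-! ### Odd powers of a sum of two square roots -/

section OddPowCoeff

variable {R : Type*} [CommRing R]

/-- The coefficient of `√X` in `(√X + √W) ^ (2 * n + 1)`. By symmetry the coefficient of `√W` is
`oddPowCoeff W X n`. The recursion is multiplication by `(√X + √W) ^ 2 = X + W + 2 * √X * √W`. -/
def oddPowCoeff : R → R → ℕ → R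
  | _, _, 0 => 1
  | X, W, n + 1 => (X + W) * oddPowCoeff X W n + 2 * W * oddPowCoeff W X n

theorem oddPowCoeff_succ (X W : R) (n : ℕ) :
    oddPowCoeff X W (n + 1) = (X + W) * oddPowCoeff X W n + 2 * W * oddPowCoeff W X n := rfl

theorem oddPowCoeff_norm (X W : R) (n : ℕ) :
    X * oddPowCoeff X W n ^ 2 - W * oddPowCoeff W X n ^ 2 = (X - W) ^ (2 * n + 1) := by
  induction n with
  | zero => simp [oddPowCoeff]
  | succ n ih =>
    rw [show 2 * (n + 1) + 1 = 2 * n + 1 + 2 by ring, pow_add, ← ih]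
    simp only [oddPowCoeff]
    ring

theorem oddPowCoeff_two_mul_add_one (X W : R) (j : ℕ) :
    oddPowCoeff X W (2 * j + 1) = X * oddPowCoeff X W j ^ 2 + W * oddPowCoeff W X j ^ 2 +
      2 * W * (oddPowCoeff X W j * oddPowCoeff W X j) := by
  induction j generalizing X W with
  | zero => simp [oddPowCoeff]
  | succ j ih =>
    rw [show 2 * (j + 1) + 1 = 2 * j + 1 + 1 + 1 by ring]
    simp only [oddPowCoeff_succ _ _ (_ + 1), oddPowCoeff_succ _ _ j, ih X W, ih W X]
    ring

theorem oddPowCoeff_add (X W : R) (n j : ℕ) :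
    oddPowCoeff X W (n + (2 * j + 1)) =
      (X * oddPowCoeff X W j ^ 2 + W * oddPowCoeff W X j ^ 2) * oddPowCoeff X W n +
      2 * W * (oddPowCoeff X W j * oddPowCoeff W X j) * oddPowCoeff W X n := by
  induction n generalizing X W with
  | zero => rw [zero_add, oddPowCoeff_two_mul_add_one, oddPowCoeff, oddPowCoeff, mul_one, mul_one]
  | succ n ih =>
    rw [Nat.add_right_comm n 1]
    simp only [oddPowCoeff_succ _ _ (n + _), oddPowCoeff_succ _ _ n, ih X W, ih W X]
    ring

-- The exponents multiply: `2 * ((2 * j + 1) * i + j) + 1 = (2 * j + 1) * (2 * i + 1)`.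
theorem oddPowCoeff_comp (X W : R) (i j : ℕ) :
    oddPowCoeff X W ((2 * j + 1) * i + j) = oddPowCoeff X W j *
      oddPowCoeff (X * oddPowCoeff X W j ^ 2) (W * oddPowCoeff W X j ^ 2) i := by
  induction i generalizing X W with
  | zero => simp [oddPowCoeff]
  | succ i ih =>
    rw [show (2 * j + 1) * (i + 1) + j = (2 * j + 1) * i + j + (2 * j + 1) by ring,
      oddPowCoeff_add, ih X W, ih W X]
    simp only [oddPowCoeff]
    ring

theorem dvd_oddPowCoeff_sub_pow (X W : R) (n : ℕ) : W ∣ oddPowCoeff X W n - X ^ n := by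
  induction n with
  | zero => simp [oddPowCoeff]
  | succ n ih =>
    obtain ⟨u, hu⟩ := ih
    refine ⟨X * u + oddPowCoeff X W n + 2 * oddPowCoeff W X n, ?_⟩
    simp only [oddPowCoeff]
    linear_combination X * hu

theorem dvd_oddPowCoeff_sub_mul_pow (X W : R) (n : ℕ) :
    X ∣ oddPowCoeff X W n - (2 * n + 1 : ℕ) * W ^ n := by
  induction n with
  | zero => simp [oddPowCoeff]
  | succ n ih =>
    obtain ⟨u, hu⟩ := ih
    obtain ⟨v, hv⟩ := dvd_oddPowCoeff_sub_pow W X n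
    refine ⟨W * u + oddPowCoeff X W n + 2 * W * v, ?_⟩
    simp only [oddPowCoeff]
    push_cast at hu ⊢
    linear_combination W * hu + 2 * W * hv

theorem sq_dvd_oddPowCoeff_succ_sub_choose_two (X W : R) (n : ℕ) :
    W ^ 2 ∣ oddPowCoeff X W (n + 1) - (X ^ (n + 1) + (2 * n + 3).choose 2 * W * X ^ n) := by
  induction n with
  | zero =>
    refine ⟨0, ?_⟩
    have hchoose : (2 * 0 + 3).choose 2 = 3 := rfl
    rw [oddPowCoeff, oddPowCoeff, oddPowCoeff, hchoose]
    push_cast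
    ring
  | succ n ih =>
    obtain ⟨u, hu⟩ := ih
    obtain ⟨v, hv⟩ := dvd_oddPowCoeff_sub_mul_pow W X (n + 1)
    refine ⟨X * u + W * u + 2 * v + (2 * n + 3).choose 2 * X ^ n, ?_⟩
    rw [oddPowCoeff, show 2 * (n + 1) + 3 = 2 * n + 3 + 2 by ring, choose_add_two]
    push_cast [Nat.choose_one_right, Nat.choose_zero_right] at hu hv ⊢
    linear_combination (X + W) * hu + 2 * W * hv

theorem sq_dvd_oddPowCoeff_succ_sub_choose_three (X W : R) (n : ℕ) :
    X ^ 2 ∣ oddPowCoeff X W (n + 1) -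
      ((2 * n + 3 : ℕ) * W ^ (n + 1) + (2 * n + 3).choose 3 * X * W ^ n) := by
  induction n with
  | zero =>
    refine ⟨0, ?_⟩
    have hchoose : (2 * 0 + 3).choose 3 = 1 := rfl
    rw [oddPowCoeff, oddPowCoeff, oddPowCoeff, hchoose]
    push_cast
    ring
  | succ n ih =>
    obtain ⟨u, hu⟩ := ih
    obtain ⟨v, hv⟩ := sq_dvd_oddPowCoeff_succ_sub_choose_two W X n
    refine ⟨X * u + W * u + 2 * W * v + (2 * n + 3).choose 3 * W ^ n, ?_⟩
    rw [oddPowCoeff, show 2 * (n + 1) + 3 = 2 * n + 3 + 2 by ring, choose_add_two]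
    push_cast [Nat.choose_one_right, Nat.choose_zero_right] at hu hv ⊢
    linear_combination (X + W) * hu + 2 * W * hv

end OddPowCoeff

/-! ### Prime factors of the coefficients of a power of prime exponent -/

theorem not_sq_dvd_oddPowCoeff {X W : ℤ} {n : ℕ} (hq : (2 * n + 1).Prime) (hcop : IsCoprime X W)
    (h3 : ¬ 3 ∣ X) (hqX : ((2 * n + 1 : ℕ) : ℤ) ∣ X) :
    ¬ ((2 * n + 1 : ℕ) : ℤ) ^ 2 ∣ oddPowCoeff X W n := by
  intro hdvd
  obtain - | n := n
  · exact Nat.not_prime_one hq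
  rw [show 2 * (n + 1) + 1 = 2 * n + 3 by ring] at *
  set q := 2 * n + 3
  have hq0 : (q : ℤ) ≠ 0 := by exact_mod_cast hq.ne_zero
  have hchoose : (q : ℤ) ∣ q.choose 3 := by
    have hq3 : q ≠ 3 := fun h => h3 (by simpa [h] using hqX)
    exact_mod_cast hq.dvd_choose_self three_ne_zero ((Nat.le_add_left 3 _).lt_of_ne' hq3)
  have hqW : (q : ℤ) ^ 2 ∣ q * W ^ (n + 1) := by
    have hX2 := ((pow_dvd_pow_of_dvd hqX 2).trans
      (sq_dvd_oddPowCoeff_succ_sub_choose_three X W n))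
    have hmid : (q : ℤ) ^ 2 ∣ q.choose 3 * X * W ^ n :=
      (sq (q : ℤ) ▸ mul_dvd_mul hchoose hqX).mul_right _
    exact (dvd_add_left hmid).mp ((dvd_sub_right hdvd).mp hX2)
  rw [sq, mul_dvd_mul_iff_left hq0] at hqW
  have hqp := Nat.prime_iff_prime_int.mp hq
  exact hqp.not_isUnit (hcop.isUnit_of_dvd' hqX (hqp.dvd_of_dvd_pow hqW))

theorem oddPowCoeff_dvd_exponent {X W : ℤ} {n : ℕ} (hq : (2 * n + 1).Prime) (hcop : IsCoprime X W)
    (h3 : ¬ 3 ∣ X) (hX : ∀ p, Prime p → p ∣ oddPowCoeff X W n → p ∣ X) :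
    oddPowCoeff X W n ∣ (2 * n + 1 : ℕ) := by
  have prime_eq {p : ℕ} (hp : p.Prime) (hpF : (p : ℤ) ∣ oddPowCoeff X W n) : p = 2 * n + 1 := by
    have hp' := Nat.prime_iff_prime_int.mp hp
    have hpX := hX p hp' hpF
    have hpqW := (dvd_sub_right hpF).mp (hpX.trans (dvd_oddPowCoeff_sub_mul_pow X W n))
    refine (Nat.prime_dvd_prime_iff_eq hp hq).mp ?_
    refine Int.natCast_dvd_natCast.mp ((hp'.dvd_or_dvd hpqW).resolve_right fun hpW => ?_)
    exact hp'.not_isUnit (hcop.isUnit_of_dvd' hpX (hp'.dvd_of_dvd_pow hpW))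
  have hF0 : oddPowCoeff X W n ≠ 0 := fun h => by
    have := prime_eq Nat.prime_two (h ▸ dvd_zero _)
    omega
  have hpow := Nat.eq_prime_pow_of_unique_prime_dvd (Int.natAbs_ne_zero.mpr hF0)
    fun hp hpF => prime_eq hp (Int.natCast_dvd.mpr hpF)
  set e := (oddPowCoeff X W n).natAbs.primeFactorsList.length
  have he : e ≤ 1 := by
    by_contra! he
    have hsq : ((2 * n + 1 : ℕ) : ℤ) ^ 2 ∣ oddPowCoeff X W n := by
      rw [← Nat.cast_pow, Int.natCast_dvd, hpow]
      exact pow_dvd_pow _ he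
    exact not_sq_dvd_oddPowCoeff hq hcop h3
      (hX _ (Nat.prime_iff_prime_int.mp hq) ((dvd_pow_self _ two_ne_zero).trans hsq)) hsq
  rw [Int.dvd_natCast, hpow]
  exact (pow_dvd_pow _ he).trans (pow_one _).dvd

theorem exists_prime_dvd_oddPowCoeff {X Y : ℤ} {n : ℕ} (hq : (2 * n + 1).Prime) (hX : 1 < X)
    (hY : 1 < Y) (hcop : IsCoprime X Y) (h3X : ¬ 3 ∣ X) (h3Y : ¬ 3 ∣ Y) :
    (∃ p, Prime p ∧ p ∣ oddPowCoeff X (-Y) n ∧ ¬ p ∣ X) ∨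
      ∃ p, Prime p ∧ p ∣ oddPowCoeff (-Y) X n ∧ ¬ p ∣ Y := by
  by_contra! h
  have hn : 1 ≤ n := Nat.one_le_iff_ne_zero.mpr fun h => Nat.not_prime_one (by simpa [h] using hq)
  have sq_le {F : ℤ} (hF : F ∣ (2 * n + 1 : ℕ)) : F ^ 2 ≤ (2 * n + 1) ^ 2 := by
    exact_mod_cast Int.le_of_dvd (by positivity) (pow_dvd_pow_of_dvd hF 2)
  have hF := sq_le (oddPowCoeff_dvd_exponent hq hcop.neg_right h3X h.1)
  have hG := sq_le (oddPowCoeff_dvd_exponent hq hcop.symm.neg_left (by rwa [dvd_neg])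
    fun p hp hpG => (h.2 p hp hpG).neg_right)
  have hnorm := oddPowCoeff_norm X (-Y) n
  rw [neg_mul, sub_neg_eq_add, sub_neg_eq_add, pow_succ _ (2 * n), mul_comm 2 n, pow_mul] at hnorm
  have hle : ((X + Y) ^ n) ^ 2 ≤ (2 * n + 1 : ℤ) ^ 2 := by
    refine le_of_mul_le_mul_right ?_ (show 0 < X + Y by linarith)
    rw [← hnorm]
    nlinarith
  have hlt : (2 * n + 1 : ℤ) < (X + Y) ^ n := calc
    (2 * n + 1 : ℤ) < 1 + n * 3 := by omega
    _ ≤ (1 + 3) ^ n := one_add_mul_le_pow (by norm_num) n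
    _ ≤ (X + Y) ^ n := pow_le_pow_left₀ (by norm_num) (by linarith) n
  exact (pow_lt_pow_left₀ hlt (by positivity) two_ne_zero).not_ge hle

/-! ### Descent on the norm `P ^ 2 * A + Q ^ 2 * B` -/

section Norm

variable {R : Type*} [CommRing R] {a p A B c F P Q P' Q' U V : R}

theorem dvd_right_of_dvd_left_of_norm {k : ℕ} (hc : Prime c) (hcB : ¬ c ∣ B) (hk : k ≠ 0)
    (hN : P ^ 2 * A + Q ^ 2 * B = c ^ k) (hP : c ∣ P) : c ∣ Q := by
  have hQ : c ∣ Q ^ 2 * B :=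
    (dvd_add_right ((dvd_pow hP two_ne_zero).mul_right A)).mp (hN ▸ dvd_pow_self c hk)
  exact hc.dvd_of_dvd_pow ((hc.dvd_or_dvd hQ).resolve_right hcB)

theorem dvd_sub_or_dvd_add_of_dvd_norm (hc : Prime c) (hcB : ¬ c ∣ B)
    (hN : c ∣ P ^ 2 * A + Q ^ 2 * B) (hN' : c ∣ P' ^ 2 * A + Q' ^ 2 * B) :
    c ∣ P * Q' - P' * Q ∨ c ∣ P * Q' + P' * Q := by
  have hprod : c ∣ (P * Q' - P' * Q) * (P * Q' + P' * Q) * B := by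
    convert dvd_sub (hN'.mul_left (P ^ 2)) (hN.mul_left (P' ^ 2)) using 1
    ring
  exact hc.dvd_or_dvd ((hc.dvd_or_dvd hprod).resolve_right hcB)

theorem not_dvd_sq_mul_of_dvd_pow {r : ℕ} (hp : Prime p) (hpa : ¬ p ∣ a) (hP : P ∣ a ^ r)
    (hA : A ∣ a) : ¬ p ∣ P ^ 2 * A :=
  hp.not_dvd_mul (fun h => hpa (hp.dvd_of_dvd_pow ((hp.dvd_of_dvd_pow h).trans hP)))
    fun h => hpa (h.trans hA)

theorem dvd_sq_mul_of_dvd_of_mul_dvd_pow {r : ℕ} (hp : Prime p) (hpF : p ∣ F)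
    (hF : P * F ∣ a ^ r) (haP : a ∣ P * A) : p ∣ P ^ 2 * A := by
  rw [sq, mul_assoc]
  exact ((hp.dvd_of_dvd_pow ((hpF.mul_left P).trans hF)).trans haP).mul_left P

variable [IsDomain R]

theorem pow_dvd_sub_of_pow_dvd_sq_sub_sq {m : ℕ} (hc : Prime c) (hc2 : ¬ c ∣ 2)
    (hU : ¬ c ∣ U) (hUV : c ∣ U - V) (hm : c ^ m ∣ U ^ 2 - V ^ 2) : c ^ m ∣ U - V := by
  have hadd : ¬ c ∣ U + V := fun h => by
    have h2U : c ∣ 2 * U := by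
      convert dvd_add h hUV using 1
      ring
    exact (hc.dvd_or_dvd h2U).elim hc2 hU
  rw [sq_sub_sq] at hm
  exact hc.pow_dvd_of_dvd_mul_left m hadd hm

/- The two left-hand sides are the coefficients of the product of `P * √A + Q * √(-B)` with
`U - V * √(-(A * B))`. -/
theorem exists_mul_conj_eq_pow_mul {z w m : ℕ} (hc : Prime c) (hc2 : ¬ c ∣ 2) (hcA : ¬ c ∣ A)
    (hcB : ¬ c ∣ B) (hcP : ¬ c ∣ P) (hcQ : ¬ c ∣ Q) (hcU : ¬ c ∣ U)
    (hN : P ^ 2 * A + Q ^ 2 * B = c ^ z) (hN' : U ^ 2 + A * B * V ^ 2 = c ^ w)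
    (hdvd : c ∣ Q * U - P * V * A) (hmz : m ≤ z) (hmw : m ≤ w) :
    ∃ P' Q' : R, P * U + Q * V * B = c ^ m * P' ∧ Q * U - P * V * A = c ^ m * Q' ∧
      P' ^ 2 * A + Q' ^ 2 * B = c ^ (z + w - 2 * m) := by
  obtain ⟨r, hr⟩ := pow_dvd_pow c hmz
  obtain ⟨s, hs⟩ := pow_dvd_pow c hmw
  obtain ⟨Q', hQ'⟩ : c ^ m ∣ Q * U - P * V * A := by
    refine pow_dvd_sub_of_pow_dvd_sq_sub_sq hc hc2 (hc.not_dvd_mul hcQ hcU) hdvd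
      (hc.pow_dvd_of_dvd_mul_right m hcB ⟨r * U ^ 2 - P ^ 2 * A * s, ?_⟩)
    linear_combination U ^ 2 * (hN + hr) - P ^ 2 * A * (hN' + hs)
  obtain ⟨P', hP'⟩ : c ^ m ∣ P * U + Q * V * B := by
    refine hc.pow_dvd_of_dvd_mul_left m (hc.not_dvd_mul hcP hcA) ⟨r * U - Q * B * Q', ?_⟩
    linear_combination U * (hN + hr) - Q * B * hQ'
  refine ⟨P', Q', hP', hQ', mul_left_cancel₀ (pow_ne_zero (2 * m) hc.ne_zero) ?_⟩
  calc c ^ (2 * m) * (P' ^ 2 * A + Q' ^ 2 * B)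
      = (P * U + Q * V * B) ^ 2 * A + (Q * U - P * V * A) ^ 2 * B := by rw [hP', hQ']; ring
    _ = (P ^ 2 * A + Q ^ 2 * B) * (U ^ 2 + A * B * V ^ 2) := by ring
    _ = c ^ (2 * m) * c ^ (z + w - 2 * m) := by
      rw [hN, hN', ← pow_add, ← pow_add, Nat.add_sub_cancel' (by omega)]

end Norm

section Descent

variable {a b c A B P Q P₀ Q₀ : ℤ} {z z₀ : ℕ}

theorem exponent_ne_zero_of_norm {k : ℕ} (ha : 1 < a) (hb : 1 < b) (hA : 0 < A)
    (hB : 0 < B) (haP : a ∣ P * A) (hbQ : b ∣ Q * B) (hN : P ^ 2 * A + Q ^ 2 * B = c ^ k) :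
    k ≠ 0 := by
  rintro rfl
  have haX : a ∣ P ^ 2 * A := by rw [sq, mul_assoc]; exact haP.mul_left P
  have hbY : b ∣ Q ^ 2 * B := by rw [sq, mul_assoc]; exact hbQ.mul_left Q
  have hX : 0 ≤ P ^ 2 * A := by positivity
  have hY : 0 ≤ Q ^ 2 * B := by positivity
  rw [pow_zero] at hN
  obtain h | h : P ^ 2 * A = 1 ∨ Q ^ 2 * B = 1 := by omega
  · exact ha.not_ge (Int.le_of_dvd one_pos (h ▸ haX))
  · exact hb.not_ge (Int.le_of_dvd one_pos (h ▸ hbY))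

/-- The standing assumptions on the family of elements `P * √A + Q * √(-B)` of norm a power of
`c`; for the equation `a ^ x + b ^ y = c ^ z` with prescribed parities of `x` and `y`, one takes
`A = a ^ (x % 2)` and `B = b ^ (y % 2)`. -/
structure NormData (a b c A B : ℤ) : Prop where
  prime : Prime c
  not_dvd_two : ¬ c ∣ 2
  coprime_left : IsCoprime a c
  coprime_right : IsCoprime b c
  one_lt_left : 1 < a
  one_lt_right : 1 < b
  pos_left : 0 < A
  pos_right : 0 < B
  dvd_left : A ∣ a
  dvd_right : B ∣ b

/-- `P * √A + Q * √(-B)` has norm `c ^ z` and is not divisible by `c`. The divisibilities by `a` and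
`b` hold for the elements coming from `a ^ x + b ^ y = c ^ z`, and exclude units and even powers. -/
structure IsRep (a b c A B : ℤ) (z : ℕ) (P Q : ℤ) : Prop where
  norm_eq : P ^ 2 * A + Q ^ 2 * B = c ^ z
  not_dvd_left : ¬ c ∣ P
  dvd_left : a ∣ P * A
  dvd_right : b ∣ Q * B

theorem NormData.not_dvd_left (D : NormData a b c A B) : ¬ c ∣ A := fun h =>
  D.prime.not_isUnit (D.coprime_left.isUnit_of_dvd' (h.trans D.dvd_left) dvd_rfl)

theorem NormData.not_dvd_right (D : NormData a b c A B) : ¬ c ∣ B := fun h =>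
  D.prime.not_isUnit (D.coprime_right.isUnit_of_dvd' (h.trans D.dvd_right) dvd_rfl)

theorem IsRep.exponent_ne_zero (D : NormData a b c A B) (T : IsRep a b c A B z P Q) : z ≠ 0 :=
  exponent_ne_zero_of_norm D.one_lt_left D.one_lt_right D.pos_left D.pos_right T.dvd_left
    T.dvd_right T.norm_eq

theorem IsRep.dvd_norm (D : NormData a b c A B) (T : IsRep a b c A B z P Q) :
    c ∣ P ^ 2 * A + Q ^ 2 * B :=
  T.norm_eq ▸ dvd_pow_self c (T.exponent_ne_zero D)

theorem IsRep.not_dvd_right (D : NormData a b c A B) (T : IsRep a b c A B z P Q) : ¬ c ∣ Q :=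
  fun hQ => T.not_dvd_left <| dvd_right_of_dvd_left_of_norm D.prime D.not_dvd_left
    (T.exponent_ne_zero D) (by rw [add_comm]; exact T.norm_eq) hQ

theorem IsRep.neg_right (T : IsRep a b c A B z P Q) : IsRep a b c A B z P (-Q) where
  norm_eq := by rw [neg_sq, T.norm_eq]
  not_dvd_left := T.not_dvd_left
  dvd_left := T.dvd_left
  dvd_right := by rw [neg_mul, dvd_neg]; exact T.dvd_right

/- The quotient of the two elements has norm 1. Its coefficient `S` of `√(-(A * B))` satisfies
`a ∣ A * S` and `b ∣ B * S`, which makes `A * B * S ^ 2` either zero or too large. -/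
theorem IsRep.cross_eq (D : NormData a b c A B) (T₀ : IsRep a b c A B z P₀ Q₀)
    (T : IsRep a b c A B z P Q) (hdvd : c ∣ P₀ * Q - P * Q₀) : P₀ * Q = P * Q₀ := by
  have hc := D.prime
  obtain ⟨S, hS⟩ : c ^ z ∣ P₀ * Q - P * Q₀ := by
    refine pow_dvd_sub_of_pow_dvd_sq_sub_sq hc D.not_dvd_two
      (hc.not_dvd_mul T₀.not_dvd_left (T.not_dvd_right D)) hdvd
      (hc.pow_dvd_of_dvd_mul_right z D.not_dvd_right ⟨P₀ ^ 2 - P ^ 2, ?_⟩)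
    linear_combination P₀ ^ 2 * T.norm_eq - P ^ 2 * T₀.norm_eq
  suffices hS0 : S = 0 by rwa [hS0, mul_zero, sub_eq_zero] at hS
  by_contra hS0
  have haS : a ∣ A * S := by
    refine (D.coprime_left.pow_right (n := z)).dvd_of_dvd_mul_left ?_
    convert dvd_sub (T₀.dvd_left.mul_right Q) (T.dvd_left.mul_right Q₀) using 1
    linear_combination -A * hS
  have hbS : b ∣ B * S := by
    refine (D.coprime_right.pow_right (n := z)).dvd_of_dvd_mul_left ?_
    convert dvd_sub (T.dvd_right.mul_left P₀) (T₀.dvd_right.mul_left P) using 1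
    linear_combination -B * hS
  have hAB : 0 < A * B := mul_pos D.pos_left D.pos_right
  have hle_one : A * B * S ^ 2 ≤ 1 := by
    have hcz : 0 < (c ^ z) ^ 2 := by have := pow_ne_zero z hc.ne_zero; positivity
    refine le_of_mul_le_mul_left ?_ hcz
    calc (c ^ z) ^ 2 * (A * B * S ^ 2)
        ≤ (P * P₀ * A + Q * Q₀ * B) ^ 2 + A * B * (P₀ * Q - P * Q₀) ^ 2 := by
          rw [hS]; linarith [sq_nonneg (P * P₀ * A + Q * Q₀ * B)]
      _ = (P ^ 2 * A + Q ^ 2 * B) * (P₀ ^ 2 * A + Q₀ ^ 2 * B) := by ring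
      _ = (c ^ z) ^ 2 * 1 := by rw [T.norm_eq, T₀.norm_eq]; ring
  have hab : a * b ∣ A * B * S ^ 2 := by
    convert Int.mul_dvd_mul haS hbS using 1
    ring
  have hab_le := Int.le_of_dvd (by positivity) hab
  nlinarith [D.one_lt_left, D.one_lt_right]

theorem IsRep.eq_unit_mul (D : NormData a b c A B) (T₀ : IsRep a b c A B z P₀ Q₀)
    (T : IsRep a b c A B z P Q) (hdvd : c ∣ P₀ * Q - P * Q₀) :
    ∃ e : ℤˣ, P = e * P₀ ∧ Q = e * Q₀ := by
  have hcross := T₀.cross_eq D T hdvd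
  have hnorm : (P * P₀ * A + Q * Q₀ * B) ^ 2 = (c ^ z) ^ 2 := by
    linear_combination (-A * B) * (P₀ * Q - P * Q₀) * hcross +
      (P₀ ^ 2 * A + Q₀ ^ 2 * B) * T.norm_eq + c ^ z * T₀.norm_eq
  have eq_mul (e : ℤ) (he : P * P₀ * A + Q * Q₀ * B = e * c ^ z) : P = e * P₀ ∧ Q = e * Q₀ := by
    constructor <;> apply mul_left_cancel₀ (pow_ne_zero z D.prime.ne_zero)
    · linear_combination P₀ * he - P * T₀.norm_eq - Q₀ * B * hcross
    · linear_combination Q₀ * he - Q * T₀.norm_eq + P₀ * A * hcross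
  obtain h | h := sq_eq_sq_iff_eq_or_eq_neg.mp hnorm
  · exact ⟨1, eq_mul 1 (by rw [h, one_mul])⟩
  · exact ⟨-1, eq_mul (-1) (by rw [h, neg_one_mul])⟩

theorem IsRep.sq_norm (T : IsRep a b c A B z P Q) :
    (P ^ 2 * A - Q ^ 2 * B) ^ 2 + A * B * (2 * P * Q) ^ 2 = c ^ (2 * z) := by
  rw [mul_comm 2 z, pow_mul, ← T.norm_eq]
  ring

theorem IsRep.not_dvd_sq (D : NormData a b c A B) (T : IsRep a b c A B z P Q) :
    ¬ c ∣ P ^ 2 * A - Q ^ 2 * B := fun h => by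
  have h2 : c ∣ 2 * (P ^ 2 * A) := by
    convert Int.dvd_add h (T.dvd_norm D) using 1
    ring
  exact D.prime.not_dvd_mul D.not_dvd_two (D.prime.not_dvd_mul
    (mt D.prime.dvd_of_dvd_pow T.not_dvd_left) D.not_dvd_left) h2

theorem IsRep.exists_div_sq {m : ℕ} (D : NormData a b c A B) (T₀ : IsRep a b c A B z₀ P₀ Q₀)
    (T : IsRep a b c A B z P Q) (hdvd : c ∣ P₀ * Q - P * Q₀) (hmz : m ≤ z) (hmz₀ : m ≤ 2 * z₀) :
    ∃ P' Q', P * (P₀ ^ 2 * A - Q₀ ^ 2 * B) + Q * (2 * P₀ * Q₀) * B = c ^ m * P' ∧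
      Q * (P₀ ^ 2 * A - Q₀ ^ 2 * B) - P * (2 * P₀ * Q₀) * A = c ^ m * Q' ∧
      (¬ (c ∣ P' ∧ c ∣ Q') → IsRep a b c A B (z + 2 * z₀ - 2 * m) P' Q') := by
  have hc := D.prime
  have hcQ : c ∣ Q * (P₀ ^ 2 * A - Q₀ ^ 2 * B) - P * (2 * P₀ * Q₀) * A := by
    refine (hc.dvd_or_dvd (a := P₀) ?_).resolve_left T₀.not_dvd_left
    convert dvd_sub (hdvd.mul_right (P₀ ^ 2 * A - Q₀ ^ 2 * B))
      ((T₀.dvd_norm D).mul_left (P * Q₀)) using 1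
    ring
  obtain ⟨P', Q', hP', hQ', hN⟩ := exists_mul_conj_eq_pow_mul hc D.not_dvd_two D.not_dvd_left
    D.not_dvd_right T.not_dvd_left (T.not_dvd_right D) (T₀.not_dvd_sq D) T.norm_eq T₀.sq_norm
    hcQ hmz hmz₀
  have haP' : a ∣ P' * A := by
    refine (D.coprime_left.pow_right (n := m)).dvd_of_dvd_mul_left ?_
    convert dvd_add (T.dvd_left.mul_right (P₀ ^ 2 * A - Q₀ ^ 2 * B))
      (T₀.dvd_left.mul_right (2 * Q₀ * Q * B)) using 1
    linear_combination -A * hP'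
  have hbQ' : b ∣ Q' * B := by
    refine (D.coprime_right.pow_right (n := m)).dvd_of_dvd_mul_left ?_
    convert dvd_sub (T.dvd_right.mul_right (P₀ ^ 2 * A - Q₀ ^ 2 * B))
      (T₀.dvd_right.mul_right (2 * P₀ * P * A)) using 1
    linear_combination -B * hQ'
  have hk := exponent_ne_zero_of_norm D.one_lt_left D.one_lt_right D.pos_left D.pos_right
    haP' hbQ' hN
  refine ⟨P', Q', hP', hQ', fun h => ⟨hN, fun hcP' => h ⟨hcP', ?_⟩, haP', hbQ'⟩⟩
  exact dvd_right_of_dvd_left_of_norm hc D.not_dvd_right hk hN hcP'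

/- Otherwise the quotient of the square of `T₀` by `T` would have norm `c ^ (2 * z₀ - z)`. -/
theorem IsRep.two_mul_le (D : NormData a b c A B) (T₀ : IsRep a b c A B z₀ P₀ Q₀)
    (hmin : ∀ z P Q, IsRep a b c A B z P Q → z₀ ≤ z) (T : IsRep a b c A B z P Q) (hz : z₀ < z)
    (hdvd : c ∣ P₀ * Q - P * Q₀) : 2 * z₀ ≤ z := by
  by_contra! hlt
  obtain ⟨P', Q', hP', hQ', hrep⟩ := T₀.exists_div_sq D T hdvd le_rfl hlt.le
  have hsq : P₀ ^ 2 * A - Q₀ ^ 2 * B = P' * (A * P) + Q' * (B * Q) := by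
    apply mul_left_cancel₀ (pow_ne_zero z D.prime.ne_zero)
    linear_combination A * P * hP' + B * Q * hQ' - (P₀ ^ 2 * A - Q₀ ^ 2 * B) * T.norm_eq
  have T' := hrep fun h => T₀.not_dvd_sq D (hsq ▸ dvd_add (h.1.mul_right _) (h.2.mul_right _))
  have := hmin _ _ _ T'
  omega

theorem IsRep.exists_eq_mul_sq (D : NormData a b c A B) (T₀ : IsRep a b c A B z₀ P₀ Q₀)
    (hmin : ∀ z P Q, IsRep a b c A B z P Q → z₀ ≤ z) (T : IsRep a b c A B z P Q) (hz : z₀ < z)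
    (hdvd : c ∣ P₀ * Q - P * Q₀) :
    ∃ z' < z, ∃ P' Q', IsRep a b c A B z' P' Q' ∧ c ∣ P₀ * Q' - P' * Q₀ ∧
      P = P' * (P₀ ^ 2 * A - Q₀ ^ 2 * B) - Q' * (2 * P₀ * Q₀) * B ∧
      Q = Q' * (P₀ ^ 2 * A - Q₀ ^ 2 * B) + P' * (2 * P₀ * Q₀) * A := by
  have hc := D.prime
  obtain ⟨P', Q', hP', hQ', hrep⟩ :=
    T₀.exists_div_sq D T hdvd (T₀.two_mul_le D hmin T hz hdvd) le_rfl
  have hP : P = P' * (P₀ ^ 2 * A - Q₀ ^ 2 * B) - Q' * (2 * P₀ * Q₀) * B := by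
    apply mul_left_cancel₀ (pow_ne_zero (2 * z₀) hc.ne_zero)
    linear_combination (P₀ ^ 2 * A - Q₀ ^ 2 * B) * hP' - 2 * P₀ * Q₀ * B * hQ' - P * T₀.sq_norm
  have hQ : Q = Q' * (P₀ ^ 2 * A - Q₀ ^ 2 * B) + P' * (2 * P₀ * Q₀) * A := by
    apply mul_left_cancel₀ (pow_ne_zero (2 * z₀) hc.ne_zero)
    linear_combination (P₀ ^ 2 * A - Q₀ ^ 2 * B) * hQ' + 2 * P₀ * Q₀ * A * hP' - Q * T₀.sq_norm
  have T' := hrep fun h => T.not_dvd_left <|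
    hP ▸ dvd_sub (h.1.mul_right _) ((h.2.mul_right _).mul_right _)
  refine ⟨_, by have := T₀.exponent_ne_zero D; omega, P', Q', T', ?_, hP, hQ⟩
  refine (dvd_sub_or_dvd_add_of_dvd_norm hc D.not_dvd_right (T₀.dvd_norm D)
    (T'.dvd_norm D)).resolve_right fun h => T.not_dvd_left ?_
  convert Int.dvd_sub ((T₀.dvd_norm D).mul_left P') (h.mul_left (2 * Q₀ * B)) using 1
  linear_combination hP

theorem IsRep.exists_eq_mul_oddPowCoeff (D : NormData a b c A B) (T₀ : IsRep a b c A B z₀ P₀ Q₀)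
    (hmin : ∀ z P Q, IsRep a b c A B z P Q → z₀ ≤ z) (T : IsRep a b c A B z P Q)
    (hdvd : c ∣ P₀ * Q - P * Q₀) :
    ∃ (n : ℕ) (e : ℤˣ), P = e * (P₀ * oddPowCoeff (P₀ ^ 2 * A) (-(Q₀ ^ 2 * B)) n) ∧
      Q = e * (Q₀ * oddPowCoeff (-(Q₀ ^ 2 * B)) (P₀ ^ 2 * A) n) := by
  induction z using Nat.strong_induction_on generalizing P Q with
  | _ z ih =>
    obtain rfl | hz := (hmin _ _ _ T).eq_or_lt
    · obtain ⟨e, hP, hQ⟩ := T₀.eq_unit_mul D T hdvd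
      exact ⟨0, e, by rwa [oddPowCoeff, mul_one], by rwa [oddPowCoeff, mul_one]⟩
    · obtain ⟨z', hz', P', Q', T', hdvd', hP, hQ⟩ := T₀.exists_eq_mul_sq D hmin T hz hdvd
      obtain ⟨n, e, hP', hQ'⟩ := ih z' hz' T' hdvd'
      refine ⟨n + 1, e, ?_, ?_⟩
      · rw [hP, hP', hQ', oddPowCoeff_succ]
        ring
      · rw [hQ, hP', hQ', oddPowCoeff_succ]
        ring

theorem one_lt_sq_mul_of_dvd (ha : 1 < a) (hA : 0 < A) (hP : P ≠ 0) (haP : a ∣ P * A) :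
    1 < P ^ 2 * A := by
  have haX : a ∣ P ^ 2 * A := by rw [sq, mul_assoc]; exact haP.mul_left P
  exact ha.trans_le (Int.le_of_dvd (by positivity) haX)

theorem IsRep.isCoprime (D : NormData a b c A B) (T : IsRep a b c A B z P Q) {r : ℕ}
    (hP : P ∣ a ^ r) : IsCoprime (P ^ 2 * A) (Q ^ 2 * B) := by
  have hcX : IsCoprime (P ^ 2 * A) (c ^ z) := .symm <| .pow_left <|
    D.prime.coprime_iff_not_dvd.mpr <| not_dvd_sq_mul_of_dvd_pow D.prime
      (fun h => D.prime.not_isUnit (D.coprime_left.isUnit_of_dvd' h dvd_rfl)) hP D.dvd_left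
  rw [← T.norm_eq, add_comm] at hcX
  exact IsCoprime.of_add_mul_left_right (z := 1) (by rwa [mul_one])

theorem IsRep.not_prime_of_dvd_pow {i r s : ℕ} (D : NormData a b c A B)
    (T : IsRep a b c A B z P Q) (h3a : ¬ 3 ∣ a) (h3b : ¬ 3 ∣ b)
    (hP : P * oddPowCoeff (P ^ 2 * A) (-(Q ^ 2 * B)) i ∣ a ^ r)
    (hQ : Q * oddPowCoeff (-(Q ^ 2 * B)) (P ^ 2 * A) i ∣ b ^ s) : ¬ (2 * i + 1).Prime := by
  intro hq
  have hP0 : P ≠ 0 := fun h => T.not_dvd_left (h ▸ dvd_zero c)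
  have hQ0 : Q ≠ 0 := fun h => T.not_dvd_right D (h ▸ dvd_zero c)
  obtain ⟨p, hp, hpF, hpX⟩ | ⟨p, hp, hpG, hpY⟩ := exists_prime_dvd_oddPowCoeff hq
    (one_lt_sq_mul_of_dvd D.one_lt_left D.pos_left hP0 T.dvd_left)
    (one_lt_sq_mul_of_dvd D.one_lt_right D.pos_right hQ0 T.dvd_right)
    (T.isCoprime D (dvd_of_mul_right_dvd hP))
    (not_dvd_sq_mul_of_dvd_pow Int.prime_three h3a (dvd_of_mul_right_dvd hP) D.dvd_left)
    (not_dvd_sq_mul_of_dvd_pow Int.prime_three h3b (dvd_of_mul_right_dvd hQ) D.dvd_right)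
  · exact hpX (dvd_sq_mul_of_dvd_of_mul_dvd_pow hp hpF hP T.dvd_left)
  · exact hpY (dvd_sq_mul_of_dvd_of_mul_dvd_pow hp hpG hQ T.dvd_right)

theorem IsRep.mul_oddPowCoeff {j r : ℕ} (D : NormData a b c A B) (T : IsRep a b c A B z P Q)
    (hP : P * oddPowCoeff (P ^ 2 * A) (-(Q ^ 2 * B)) j ∣ a ^ r) :
    IsRep a b c A B (z * (2 * j + 1)) (P * oddPowCoeff (P ^ 2 * A) (-(Q ^ 2 * B)) j)
      (Q * oddPowCoeff (-(Q ^ 2 * B)) (P ^ 2 * A) j) where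
  norm_eq := by
    rw [pow_mul, ← T.norm_eq]
    linear_combination oddPowCoeff_norm (P ^ 2 * A) (-(Q ^ 2 * B)) j
  not_dvd_left h := D.prime.not_isUnit
    (D.coprime_left.pow_left.isUnit_of_dvd' (h.trans hP) dvd_rfl)
  dvd_left := by rw [mul_right_comm]; exact T.dvd_left.mul_right _
  dvd_right := by rw [mul_right_comm]; exact T.dvd_right.mul_right _

theorem IsRep.exponent_eq_zero_of_dvd_pow {n r s : ℕ} (D : NormData a b c A B)
    (T : IsRep a b c A B z P Q) (h3a : ¬ 3 ∣ a) (h3b : ¬ 3 ∣ b)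
    (hP : P * oddPowCoeff (P ^ 2 * A) (-(Q ^ 2 * B)) n ∣ a ^ r)
    (hQ : Q * oddPowCoeff (-(Q ^ 2 * B)) (P ^ 2 * A) n ∣ b ^ s) : n = 0 := by
  by_contra hn
  obtain ⟨q, hq, k, hk⟩ := Nat.exists_prime_and_dvd (show 2 * n + 1 ≠ 1 by omega)
  have hodd : Odd (q * k) := ⟨n, hk.symm⟩
  obtain ⟨⟨i, rfl⟩, j, rfl⟩ := Nat.odd_mul.mp hodd
  obtain rfl : n = (2 * j + 1) * i + j := by linarith
  rw [oddPowCoeff_comp, ← mul_assoc] at hP hQ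
  refine (T.mul_oddPowCoeff D (dvd_of_mul_right_dvd hP)).not_prime_of_dvd_pow (i := i) D h3a h3b
    (r := r) (s := s) ?_ ?_ hq
  · convert hP using 3 <;> ring
  · convert hQ using 3 <;> ring

theorem IsRep.exists_minimal (T : IsRep a b c A B z P Q) :
    ∃ z₀ P₀ Q₀, IsRep a b c A B z₀ P₀ Q₀ ∧ ∀ z P Q, IsRep a b c A B z P Q → z₀ ≤ z := by
  classical
  have hex : ∃ z P Q, IsRep a b c A B z P Q := ⟨z, P, Q, T⟩
  obtain ⟨P₀, Q₀, T₀⟩ := Nat.find_spec hex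
  exact ⟨_, P₀, Q₀, T₀, fun z P Q T => Nat.find_min' hex ⟨P, Q, T⟩⟩

theorem IsRep.sq_eq_sq_of_minimal {r s : ℕ} (D : NormData a b c A B) (h3a : ¬ 3 ∣ a)
    (h3b : ¬ 3 ∣ b) (T₀ : IsRep a b c A B z₀ P₀ Q₀)
    (hmin : ∀ z P Q, IsRep a b c A B z P Q → z₀ ≤ z) (T : IsRep a b c A B z P Q)
    (hP : P ∣ a ^ r) (hQ : Q ∣ b ^ s) : P ^ 2 = P₀ ^ 2 ∧ Q ^ 2 = Q₀ ^ 2 := by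
  wlog hdvd : c ∣ P₀ * Q - P * Q₀ generalizing Q
  · have hdvd' := (dvd_sub_or_dvd_add_of_dvd_norm D.prime D.not_dvd_right (T₀.dvd_norm D)
      (T.dvd_norm D)).resolve_left hdvd
    have := this T.neg_right (neg_dvd.mpr hQ) (by
      convert (Int.dvd_neg.mpr hdvd') using 1
      ring)
    rwa [neg_sq] at this
  obtain ⟨n, e, rfl, rfl⟩ := T₀.exists_eq_mul_oddPowCoeff D hmin T hdvd
  rw [Units.mul_left_dvd] at hP hQ
  obtain rfl := T₀.exponent_eq_zero_of_dvd_pow D h3a h3b hP hQ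
  have he : (e : ℤ) ^ 2 = 1 := by rw [← Units.val_pow_eq_pow_val, Int.units_sq, Units.val_one]
  simp only [oddPowCoeff, mul_one, mul_pow, he, one_mul, and_self]

theorem IsRep.sq_eq_sq {z' : ℕ} {P' Q' : ℤ} {r s r' s' : ℕ} (D : NormData a b c A B)
    (h3a : ¬ 3 ∣ a) (h3b : ¬ 3 ∣ b) (T : IsRep a b c A B z P Q) (T' : IsRep a b c A B z' P' Q')
    (hP : P ∣ a ^ r) (hQ : Q ∣ b ^ s) (hP' : P' ∣ a ^ r') (hQ' : Q' ∣ b ^ s') :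
    P ^ 2 = P' ^ 2 ∧ Q ^ 2 = Q' ^ 2 := by
  obtain ⟨z₀, P₀, Q₀, T₀, hmin⟩ := T.exists_minimal
  have h := T₀.sq_eq_sq_of_minimal D h3a h3b hmin T hP hQ
  have h' := T₀.sq_eq_sq_of_minimal D h3a h3b hmin T' hP' hQ'
  exact ⟨h.1.trans h'.1.symm, h.2.trans h'.2.symm⟩

end Descent

/-! ### The equation `a ^ x + b ^ y = c ^ z` -/

section PowAddPow

variable {a b c x y z x' y' z' : ℕ}

theorem normData_pow_mod_two (hac : a.Coprime c) (hbc : b.Coprime c) (ha : 1 < a) (hb : 1 < b)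
    (hc : c.Prime) (hcodd : Odd c) (x y : ℕ) :
    NormData (a : ℤ) b c ((a : ℤ) ^ (x % 2)) ((b : ℤ) ^ (y % 2)) where
  prime := Nat.prime_iff_prime_int.mp hc
  not_dvd_two h := hcodd.not_two_dvd_nat
    ((Nat.prime_dvd_prime_iff_eq hc Nat.prime_two).mp (Int.natCast_dvd_natCast.mp h)).symm.dvd
  coprime_left := hac.isCoprime
  coprime_right := hbc.isCoprime
  one_lt_left := by exact_mod_cast ha
  one_lt_right := by exact_mod_cast hb
  pos_left := by positivity
  pos_right := by positivity
  dvd_left := (pow_dvd_pow _ (Nat.le_of_lt_succ (x.mod_lt two_pos))).trans (pow_one _).dvd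
  dvd_right := (pow_dvd_pow _ (Nat.le_of_lt_succ (y.mod_lt two_pos))).trans (pow_one _).dvd

theorem pow_div_two_sq_mul_pow_mod_two {M : Type*} [Monoid M] (a : M) (x : ℕ) :
    (a ^ (x / 2)) ^ 2 * a ^ (x % 2) = a ^ x := by
  rw [← pow_mul, ← pow_add, Nat.div_add_mod']

theorem dvd_pow_div_two_mul_pow_mod_two {M : Type*} [Monoid M] (a : M) (hx : 0 < x) :
    a ∣ a ^ (x / 2) * a ^ (x % 2) := by
  rw [← pow_add]
  exact dvd_pow_self a (by omega)

theorem isRep_pow_div_two (hac : a.Coprime c) (hc : c.Prime) (hx : 0 < x) (hy : 0 < y)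
    (h : a ^ x + b ^ y = c ^ z) :
    IsRep (a : ℤ) b c ((a : ℤ) ^ (x % 2)) ((b : ℤ) ^ (y % 2)) z (a ^ (x / 2)) (b ^ (y / 2)) where
  norm_eq := by
    rw [pow_div_two_sq_mul_pow_mod_two, pow_div_two_sq_mul_pow_mod_two]
    exact_mod_cast h
  not_dvd_left h := (Nat.prime_iff_prime_int.mp hc).not_isUnit
    (hac.isCoprime.pow_left.isUnit_of_dvd' h dvd_rfl)
  dvd_left := dvd_pow_div_two_mul_pow_mod_two _ hx
  dvd_right := dvd_pow_div_two_mul_pow_mod_two _ hy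

theorem solution_eq_of_mod_two_eq (hac : a.Coprime c) (hbc : b.Coprime c) (ha : 1 < a) (hb : 1 < b)
    (h3a : ¬ 3 ∣ a) (h3b : ¬ 3 ∣ b) (hc : c.Prime) (hcodd : Odd c) (hx : 0 < x) (hy : 0 < y)
    (hx' : 0 < x') (hy' : 0 < y') (h : a ^ x + b ^ y = c ^ z) (h' : a ^ x' + b ^ y' = c ^ z')
    (hxx : x % 2 = x' % 2) (hyy : y % 2 = y' % 2) : (x, y, z) = (x', y', z') := by
  have T := isRep_pow_div_two hac hc hx hy h
  have T' := isRep_pow_div_two hac hc hx' hy' h'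
  rw [← hxx, ← hyy] at T'
  obtain ⟨hP, hQ⟩ := T.sq_eq_sq (normData_pow_mod_two hac hbc ha hb hc hcodd x y)
    (by exact_mod_cast h3a) (by exact_mod_cast h3b) T' dvd_rfl dvd_rfl dvd_rfl dvd_rfl
  have hax : a ^ x = a ^ x' := by
    rw [← pow_div_two_sq_mul_pow_mod_two a x, ← pow_div_two_sq_mul_pow_mod_two a x', hxx]
    exact congrArg (· * _) (by exact_mod_cast hP)
  have hby : b ^ y = b ^ y' := by
    rw [← pow_div_two_sq_mul_pow_mod_two b y, ← pow_div_two_sq_mul_pow_mod_two b y', hyy]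
    exact congrArg (· * _) (by exact_mod_cast hQ)
  have hcz : c ^ z = c ^ z' := by rw [← h, ← h', hax, hby]
  rw [Nat.pow_right_injective ha hax, Nat.pow_right_injective hb hby,
    Nat.pow_right_injective hc.two_le hcz]

-- Modulo 3, `a ^ x = (-1) ^ x` and `b ^ y` depends only on the parity of `y`; whether their sum
-- vanishes does not depend on the solution, since it means that `c = 3`.
theorem left_mod_two_eq_of_right (ha : a % 3 = 2) (hb : ¬ 3 ∣ b) (hz : 0 < z) (hz' : 0 < z')
    (h : a ^ x + b ^ y = c ^ z) (h' : a ^ x' + b ^ y' = c ^ z') (hyy : y % 2 = y' % 2) :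
    x % 2 = x' % 2 := by
  have ha3 : (a : ZMod 3) = -1 := by rw [← ZMod.natCast_mod, ha]; decide
  have hb3 : (b : ZMod 3) ≠ 0 := fun h => hb ((ZMod.natCast_eq_zero_iff b 3).mp h)
  have sum_eq_zero_iff {x y z : ℕ} (hz : 0 < z) (h : a ^ x + b ^ y = c ^ z) :
      (-1 : ZMod 3) ^ (x % 2) + (b : ZMod 3) ^ (y % 2) = 0 ↔ (c : ZMod 3) = 0 := by
    have hsum : (a : ZMod 3) ^ x + (b : ZMod 3) ^ y = (c : ZMod 3) ^ z := by
      exact_mod_cast congrArg (Nat.cast (R := ZMod 3)) h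
    rw [← pow_eq_pow_mod x neg_one_sq, ← pow_eq_pow_mod y (ZMod.pow_card_sub_one_eq_one hb3),
      ← ha3, hsum, pow_eq_zero_iff hz.ne']
  have hiff := (sum_eq_zero_iff hz h).trans (sum_eq_zero_iff hz' h').symm
  have hbpow := pow_ne_zero (y' % 2) hb3
  rw [hyy] at hiff
  generalize (b : ZMod 3) ^ (y' % 2) = β at hiff hbpow
  obtain hx | hx := Nat.mod_two_eq_zero_or_one x <;>
    obtain hx' | hx' := Nat.mod_two_eq_zero_or_one x' <;>
    rw [hx, hx'] at hiff ⊢ <;> revert β <;> decide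

end PowAddPow

/-- Lemma 2.12: if `a ≡ 2 mod 3`, `3 ∤ b`, `c` an odd prime, and `a^x + b^y = c^z`
has more than one solution, then it has exactly two solutions, whose `y`-values
have opposite parity. -/
theorem stmt_17 (a b c : ℕ) (hab : Nat.Coprime a b) (hac : Nat.Coprime a c)
    (hbc : Nat.Coprime b c) (ha1 : 1 < a) (hb1 : 1 < b) (hc1 : 1 < c)
    (ha3 : a % 3 = 2) (hb3 : ¬ (3 ∣ b)) (hc : Nat.Prime c) (hcodd : Odd c)
    (hmany : ∃ s t : ℕ × ℕ × ℕ, s ≠ t ∧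
        (0 < s.1 ∧ 0 < s.2.1 ∧ 0 < s.2.2 ∧ a ^ s.1 + b ^ s.2.1 = c ^ s.2.2) ∧
        (0 < t.1 ∧ 0 < t.2.1 ∧ 0 < t.2.2 ∧ a ^ t.1 + b ^ t.2.1 = c ^ t.2.2)) :
    ∃ x₁ y₁ z₁ x₂ y₂ z₂ : ℕ,
        (0 < x₁ ∧ 0 < y₁ ∧ 0 < z₁ ∧ a ^ x₁ + b ^ y₁ = c ^ z₁) ∧
        (0 < x₂ ∧ 0 < y₂ ∧ 0 < z₂ ∧ a ^ x₂ + b ^ y₂ = c ^ z₂) ∧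
        (x₁, y₁, z₁) ≠ (x₂, y₂, z₂) ∧
        (∀ x y z : ℕ, 0 < x → 0 < y → 0 < z → a ^ x + b ^ y = c ^ z →
          (x, y, z) = (x₁, y₁, z₁) ∨ (x, y, z) = (x₂, y₂, z₂)) ∧
        y₁ % 2 ≠ y₂ % 2 := by
  obtain ⟨⟨x₁, y₁, z₁⟩, ⟨x₂, y₂, z₂⟩, hne, ⟨hx₁, hy₁, hz₁, h₁⟩, ⟨hx₂, hy₂, hz₂, h₂⟩⟩ := hmany
  dsimp only at *
  have eq_of_parity {x y z x' y' z' : ℕ} (hx : 0 < x) (hy : 0 < y) (hz : 0 < z)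
      (h : a ^ x + b ^ y = c ^ z) (hx' : 0 < x') (hy' : 0 < y') (hz' : 0 < z')
      (h' : a ^ x' + b ^ y' = c ^ z') (hyy : y % 2 = y' % 2) : (x, y, z) = (x', y', z') :=
    solution_eq_of_mod_two_eq hac hbc ha1 hb1 (by omega) hb3 hc hcodd hx hy hx' hy' h h'
      (left_mod_two_eq_of_right ha3 hb3 hz hz' h h' hyy) hyy
  have hpar : y₁ % 2 ≠ y₂ % 2 := fun hyy =>
    hne (eq_of_parity hx₁ hy₁ hz₁ h₁ hx₂ hy₂ hz₂ h₂ hyy)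
  refine ⟨x₁, y₁, z₁, x₂, y₂, z₂, ⟨hx₁, hy₁, hz₁, h₁⟩, ⟨hx₂, hy₂, hz₂, h₂⟩, hne, ?_, hpar⟩
  intro x y z hx hy hz h
  obtain hyy | hyy : y % 2 = y₁ % 2 ∨ y % 2 = y₂ % 2 := by omega
  · exact .inl (eq_of_parity hx hy hz h hx₁ hy₁ hz₁ h₁ hyy)
  · exact .inr (eq_of_parity hx hy hz h hx₂ hy₂ hz₂ h₂ hyy)
end
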